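/- Let T > 0, ν, μ ∈ (0,1], and M > 0. Let (u, B, P) be a smooth (jointly in (t,x)) solution, horizontally periodic in x for each t, of the viscous MHD system at every (t,x) ∈ [0,T] × ℝ³: ∂ₜu − νΔu + (curl u) × u + B × (curl B) + ∇P = 0, div u = 0, ∂ₜB − μΔB = curl(u × B), div B = 0, such that for every t ∈ [0,T]: u₃ = ∂₃u₁ = ∂₃u₂ = 0, B₁ = B₂ = 0, (ΔB)₁ = (ΔB)₂ = 0, and (curl Δu)₁ = (curl Δu)₂ = 0 at every point of ∂Ω. Let (u⁰, B⁰, P⁰) be a smooth, horizontally periodic solution of the ideal MHD system (the same system with ν = μ = 0) on [0,T] × ℝ³ such that for every t ∈ [0,T]: u⁰₃ = 0, (curl u⁰)₁ = (curl u⁰)₂ = 0, B⁰₁ = B⁰₂ = 0, and (ΔB⁰)₁ = (ΔB⁰)₂ = 0 at every point of ∂Ω. Assume u(0,x) = u⁰(0,x) and B(0,x) = B⁰(0,x) for all x with 0 ≤ x₃ ≤ 1, and that all partial derivatives in x of u, B, u⁰, B⁰ up to order 4 are bounded in absolute value by M on [0,T] × {x : 0 ≤ x₃ ≤ 1}. Then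 there exists a constant C, depending only on T and M and not on ν and μ, such that for every t ∈ [0,T]: ∫_Q (|u(t,x) − u⁰(t,x)|² + |Δ(u − u⁰)(t,x)|² + |B(t,x) − B⁰(t,x)|² + |Δ(B − B⁰)(t,x)|²) dx ≤ C(ν + μ). -/

import Mathlib

noncomputable section

open MeasureTheory

/-- Points/vectors in ℝ³, indexed by `Fin 3` (so index `0,1,2` stand for coordinates `1,2,3`). -/
abbrev V3 : Type := Fin 3 → ℝ

/-- Partial derivative in the `i`-th coordinate direction. -/
def pd (i : Fin 3) (f : V3 → ℝ) (x : V3) : ℝ := fderiv ℝ f x (Pi.single i 1)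

/-- Divergence of a vector field. -/
def vdiv (u : V3 → V3) (x : V3) : ℝ :=
  pd 0 (fun y => u y 0) x + pd 1 (fun y => u y 1) x + pd 2 (fun y => u y 2) x

/-- Curl of a vector field. -/
def vcurl (u : V3 → V3) (x : V3) : V3 :=
  ![pd 1 (fun y => u y 2) x - pd 2 (fun y => u y 1) x,
    pd 2 (fun y => u y 0) x - pd 0 (fun y => u y 2) x,
    pd 0 (fun y => u y 1) x - pd 1 (fun y => u y 0) x]

/-- Laplacian of a scalar function. -/
def lap (f : V3 → ℝ) (x : V3) : ℝ :=
  pd 0 (pd 0 f) x + pd 1 (pd 1 f) x + pd 2 (pd 2 f) x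

/-- Componentwise Laplacian of a vector field. -/
def vlap (u : V3 → V3) (x : V3) : V3 := fun i => lap (fun y => u y i) x

/-- Advective derivative `(u·∇)V`. -/
def adv (u V : V3 → V3) (x : V3) : V3 := fun i =>
  u x 0 * pd 0 (fun y => V y i) x + u x 1 * pd 1 (fun y => V y i) x +
    u x 2 * pd 2 (fun y => V y i) x

/-- Cross product in ℝ³. -/
def cross (a b : V3) : V3 :=
  ![a 1 * b 2 - a 2 * b 1, a 2 * b 0 - a 0 * b 2, a 0 * b 1 - a 1 * b 0]

/-- Dot product in ℝ³. -/
def dot (a b : V3) : ℝ := a 0 * b 0 + a 1 * b 1 + a 2 * b 2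

/-- Gradient of a scalar function. -/
def grad (f : V3 → ℝ) (x : V3) : V3 := fun i => pd i f x

/-- The boundary `∂Ω = {x : x₃ = 0 or x₃ = 1}`. -/
def onBdry (x : V3) : Prop := x 2 = 0 ∨ x 2 = 1

/-- Horizontal periodicity (period 1 in x₁ and x₂) of a scalar function. -/
def hperS (f : V3 → ℝ) : Prop :=
  (∀ x, f (x + Pi.single 0 1) = f x) ∧ (∀ x, f (x + Pi.single 1 1) = f x)

/-- Horizontal periodicity (period 1 in x₁ and x₂) of a vector field. -/
def hperV (u : V3 → V3) : Prop :=
  (∀ x, u (x + Pi.single 0 1) = u x) ∧ (∀ x, u (x + Pi.single 1 1) = u x)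

/-- The unit cube `Q = [0,1]³`. -/
def Q3 : Set V3 := Set.Icc 0 1

/-- Iterated partial derivative along a list of coordinate directions. -/
def pdList (l : List (Fin 3)) (f : V3 → ℝ) : V3 → ℝ := l.foldr pd f

/-!
Measure the difference `w = u - u⁰`, `b = B - B⁰` of the two flows by its energy
`∫_Q (|w|² + |b|² + |Δw|² + |Δb|²)`. After absorbing `½|u|² - ½|B|²` into the pressure, the
difference solves the equations transported by `(u, B)`, with forcing terms that are either linear
in `(w, b)` itself or of the form `νΔu`, `μΔB`. The boundary conditions are stable under `Δ`: `w₃`,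
`Δw₃` and the tangential parts of `b`, `Δb` vanish on `x₃ ∈ {0, 1}`, so transport and pressure
integrate to zero both in the equations and in their Laplacians. What remains is the power of the
forcing and of the commutators `[Δ, u · ∇]`, `[Δ, B · ∇]`, and it only involves derivatives of
`(w, b)` up to order two. Since every component satisfies a Dirichlet or a Neumann condition,
`∫_Q |∇²f|² = ∫_Q (Δf)²`, and these derivatives are controlled by the energy. Treating the
viscous terms as a forcing of size `ν`, `μ` rather than as dissipation gives
`E' ≤ K (E + ν² + μ²)`, and Grönwall's inequality concludes.
-/

section Derivations

variable {R A ι : Type*} [CommRing R] [CommRing A] [Algebra R A] [Fintype ι]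

/-- The derivation `a · ∇` along a vector field `a`, where the family `D` of derivations plays the
role of the partial derivatives. -/
def advection (D : ι → Derivation R A A) (a : ι → A) : Derivation R A A := ∑ j, a j • D j

/-- The divergence `∇ · a` with respect to a family `D` of derivations. -/
def divergence (D : ι → Derivation R A A) : (ι → A) →ₗ[R] A :=
  ∑ k, (D k : A →ₗ[R] A) ∘ₗ LinearMap.proj k

/-- The Laplace operator `∑ₖ Dₖ²` of a family `D` of derivations. -/
def laplacian (D : ι → Derivation R A A) : A →ₗ[R] A := ∑ k, (D k : A →ₗ[R] A) ∘ₗ D k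

/-- The commutator `[Δ, a · ∇]` applied to `f`. -/
def laplacianCommutator (D : ι → Derivation R A A) (a : ι → A) (f : A) : A :=
  laplacian D (advection D a f) - advection D a (laplacian D f)

variable (D : ι → Derivation R A A)

lemma advection_apply (a : ι → A) (f : A) : advection D a f = ∑ j, a j * D j f := by
  refine (congrFun (map_sum Derivation.coeFnAddMonoidHom (fun j => a j • D j) _) f).trans ?_
  simp [Finset.sum_apply]

lemma advection_sub_advection (a b : ι → A) (f g : A) :
    advection D a f - advection D b g = advection D a (f - g) + advection D (a - b) g := by
  simp only [advection_apply, Pi.sub_apply, map_sub, sub_mul, Finset.sum_sub_distrib]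
  ring

lemma divergence_apply (a : ι → A) : divergence D a = ∑ k, D k (a k) := by
  simp [divergence]

lemma laplacian_apply (f : A) : laplacian D f = ∑ k, D k (D k f) := by
  simp [laplacian]

lemma divergence_mul_right (a : ι → A) (f : A) :
    divergence D (fun k => a k * f) = advection D a f + f * divergence D a := by
  simp only [divergence_apply, advection_apply, Derivation.leibniz, smul_eq_mul,
    Finset.sum_add_distrib, Finset.mul_sum]

lemma laplacian_mul (f g : A) :
    laplacian D (f * g) = laplacian D f * g + 2 * ∑ k, D k f * D k g + f * laplacian D g := by
  simp only [laplacian_apply, Derivation.leibniz, map_add, smul_eq_mul, Finset.sum_mul,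
    Finset.mul_sum, ← Finset.sum_add_distrib]
  exact Finset.sum_congr rfl fun k _ => by ring

variable {D}

lemma derivation_laplacian_comm {δ : Derivation R A A} (hδ : ∀ i f, δ (D i f) = D i (δ f)) (f : A) :
    δ (laplacian D f) = laplacian D (δ f) := by
  simp only [laplacian_apply, map_sum, hδ]

lemma divergence_laplacian (hD : ∀ i j f, D i (D j f) = D j (D i f)) (a : ι → A) :
    divergence D (fun i => laplacian D (a i)) = laplacian D (divergence D a) := by
  simp only [divergence_apply, map_sum, derivation_laplacian_comm (hD _)]

/-- The identity behind `∫ (Δf)² = ∫ |∇²f|²`. -/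
lemma laplacian_sq (hD : ∀ i j f, D i (D j f) = D j (D i f)) (f : A) :
    laplacian D f ^ 2 = ∑ j, ∑ k, D j (D k f) ^ 2 + divergence D (fun k =>
      D k f * laplacian D f - advection D (fun j => D j f) (D k f)) := by
  have expand_advection : divergence D (fun k => advection D (fun j => D j f) (D k f))
      = ∑ j, ∑ k, D j (D k f) ^ 2 + advection D (fun j => D j f) (laplacian D f) := by
    simp only [divergence_apply, advection_apply, map_sum, Derivation.leibniz, smul_eq_mul,
      laplacian_apply, Finset.sum_add_distrib]
    rw [add_comm]
    congr 1
    · exact Finset.sum_congr rfl fun j _ => Finset.sum_congr rfl fun k _ => by rw [hD k j]; ring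
    · exact Finset.sum_congr rfl fun j _ => Finset.sum_congr rfl fun k _ => by rw [hD j k]
  have expand_sq : divergence D (fun k => D k f * laplacian D f)
      = advection D (fun j => D j f) (laplacian D f) + laplacian D f ^ 2 := by
    rw [divergence_mul_right, divergence_apply, ← laplacian_apply, sq]
  have split := map_sub (divergence D) (fun k => D k f * laplacian D f)
    (fun k => advection D (fun j => D j f) (D k f))
  linear_combination expand_advection - expand_sq - split

lemma laplacianCommutator_eq (hD : ∀ i j f, D i (D j f) = D j (D i f)) (a : ι → A) (f : A) :
    laplacianCommutator D a f =
      ∑ j, laplacian D (a j) * D j f + 2 * ∑ j, ∑ k, D k (a j) * D k (D j f) := by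
  simp only [laplacianCommutator, advection_apply, map_sum, laplacian_mul,
    derivation_laplacian_comm (hD _), Finset.sum_add_distrib, Finset.mul_sum]
  ring

end Derivations

section PowerBalance

variable {A ι : Type*} [CommRing A] [Algebra ℝ A] [Fintype ι]

/-- The density `g · g' + h · h'` of the pairing of two pairs of vector fields. -/
def pairing (g h g' h' : ι → A) : A := ∑ i, (g i * g' i + h i * h' i)

/-- The density `|w|² + |b|² + |Δw|² + |Δb|²` of the energy of a pair of vector fields. -/
def energyDensity (D : ι → Derivation ℝ A A) (w b : ι → A) : A :=
  pairing w b w b + pairing (laplacian D ∘ w) (laplacian D ∘ b) (laplacian D ∘ w) (laplacian D ∘ b)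

lemma derivation_energyDensity {D : ι → Derivation ℝ A A} {δ : Derivation ℝ A A}
    (hδ : ∀ i f, δ (D i f) = D i (δ f)) (w b : ι → A) :
    δ (energyDensity D w b) = (2 : ℝ) • (pairing w b (δ ∘ w) (δ ∘ b)
      + pairing (laplacian D ∘ w) (laplacian D ∘ b)
          (laplacian D ∘ δ ∘ w) (laplacian D ∘ δ ∘ b)) := by
  simp only [energyDensity, pairing, Function.comp_apply, map_add, map_sum, Derivation.leibniz,
    smul_eq_mul, derivation_laplacian_comm hδ, two_smul, ← Finset.sum_add_distrib]
  exact Finset.sum_congr rfl fun i _ => by ring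

/-- The forcing `κ Δv - w · ∇p + b · ∇q` of the difference of two flows: the dissipation of the
first flow together with the advection of the fields `p`, `q` of the second one by the
difference. -/
def perturbationForcing (D : ι → Derivation ℝ A A) (κ : ℝ) (v w b p q : ι → A) (i : ι) : A :=
  κ • laplacian D (v i) - advection D w (p i) + advection D b (q i)

/-- The forcing `Δρ - [Δ, u · ∇] g + [Δ, B · ∇] h` of the transport equation for `Δg` that results
from the transport equation `∂ₜg + u · ∇g - B · ∇h = ρ`. -/
def laplacianForcing (D : ι → Derivation ℝ A A) (u B g h ρ : ι → A) (i : ι) : A :=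
  laplacian D (ρ i) - laplacianCommutator D u (g i) + laplacianCommutator D B (h i)

/-- The power that a forcing `(ρ, σ)` of the transport equations for `(g, h)` feeds into
`energyDensity D g h`, up to the factor `2` and to terms with vanishing integral. -/
def forcingPower (D : ι → Derivation ℝ A A) (u B g h ρ σ : ι → A) : A :=
  pairing g h ρ σ + pairing (laplacian D ∘ g) (laplacian D ∘ h)
    (laplacianForcing D u B g h ρ) (laplacianForcing D u B h g σ)

/-- The power balance behind the energy estimate: only the forcing `(ρ, σ)` is not transported. -/
lemma pairing_eq_of_transport {D : ι → Derivation ℝ A A} {u B g h gt ht ρ σ : ι → A} {r : A}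
    (hg : ∀ i, gt i = ρ i - advection D u (g i) + advection D B (h i) - D i r)
    (hh : ∀ i, ht i = σ i - advection D u (h i) + advection D B (g i)) :
    pairing g h gt ht = pairing g h ρ σ - (1 / 2 : ℝ) • advection D u (pairing g h g h)
      + advection D B (∑ i, g i * h i) - advection D g r := by
  have half : (1 / 2 : ℝ) • advection D u (pairing g h g h)
      = ∑ i, (g i * advection D u (g i) + h i * advection D u (h i)) := by
    have double : advection D u (pairing g h g h)
        = (2 : ℝ) • ∑ i, (g i * advection D u (g i) + h i * advection D u (h i)) := by
      simp only [pairing, map_sum, map_add, Derivation.leibniz, smul_eq_mul, two_smul,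
        ← Finset.sum_add_distrib]
      exact Finset.sum_congr rfl fun i _ => by ring
    rw [double, smul_smul, one_div, inv_mul_cancel₀ two_ne_zero, one_smul]
  rw [half, advection_apply D g]
  simp only [pairing, hg, hh, map_sum, Derivation.leibniz, smul_eq_mul,
    ← Finset.sum_add_distrib, ← Finset.sum_sub_distrib]
  exact Finset.sum_congr rfl fun i _ => by ring

end PowerBalance

lemma single_sq_le_sum {ι : Type*} [Fintype ι] (a : ι → ℝ) (i : ι) : a i ^ 2 ≤ ∑ j, a j ^ 2 :=
  Finset.single_le_sum (f := fun j => a j ^ 2) (fun j _ => sq_nonneg (a j)) (Finset.mem_univ i)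

lemma le_mul_exp_of_hasDerivAt_le {f f' : ℝ → ℝ} {K a b : ℝ} (hf : ∀ t, HasDerivAt f (f' t) t)
    (hf' : ∀ t ∈ Set.Ico a b, f' t ≤ K * f t) :
    ∀ t ∈ Set.Icc a b, f t ≤ f a * Real.exp (K * (t - a)) := by
  intro t ht
  rw [← gronwallBound_ε0]
  refine le_gronwallBound_of_liminf_deriv_right_le
    (fun s _ => (hf s).continuousAt.continuousWithinAt) (fun s _ r hr => ?_) le_rfl
    (fun s hs => (hf' s hs).trans_eq (add_zero _).symm) t ht
  simpa only [slope_def_field, div_eq_inv_mul]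
    using (hf s).hasDerivWithinAt.liminf_right_slope_le hr

section SmoothPeriodic

variable {E : Type*} [NormedAddCommGroup E] [NormedSpace ℝ E]

/-- The algebra of smooth real functions on `E` that admit every vector of `Γ` as a period. -/
def SmoothPeriodic (Γ : Set E) : Subalgebra ℝ (E → ℝ) where
  carrier := {f | ContDiff ℝ (⊤ : ℕ∞) f ∧ ∀ c ∈ Γ, Function.Periodic f c}
  mul_mem' hf hg := ⟨hf.1.mul hg.1, fun c hc => (hf.2 c hc).mul (hg.2 c hc)⟩
  add_mem' hf hg := ⟨hf.1.add hg.1, fun c hc => (hf.2 c hc).add (hg.2 c hc)⟩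
  algebraMap_mem' _ := ⟨contDiff_const, fun _ _ _ => rfl⟩

lemma contDiff_fderiv_apply {f : E → ℝ} (hf : ContDiff ℝ (⊤ : ℕ∞) f) (v : E) :
    ContDiff ℝ (⊤ : ℕ∞) (fun x => fderiv ℝ f x v) :=
  (hf.fderiv_right (m := (⊤ : ℕ∞)) (by simp)).clm_apply contDiff_const

lemma periodic_fderiv {f : E → ℝ} {c : E} (hf : Function.Periodic f c) :
    Function.Periodic (fderiv ℝ f) c := fun x => by
  rw [← fderiv_comp_add_right, funext hf]

variable {Γ : Set E}

namespace SmoothPeriodic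

lemma contDiff (f : SmoothPeriodic Γ) : ContDiff ℝ (⊤ : ℕ∞) f.1 := f.2.1

lemma differentiableAt (f : SmoothPeriodic Γ) (x : E) : DifferentiableAt ℝ f.1 x :=
  (contDiff f).differentiable (by simp) x

lemma continuous (f : SmoothPeriodic Γ) : Continuous f.1 := (contDiff f).continuous

/-- Evaluation at a point, as an algebra homomorphism. -/
def evalAt (x : E) : SmoothPeriodic Γ →ₐ[ℝ] ℝ := (Pi.evalAlgHom ℝ _ x).comp (Subalgebra.val _)

lemma ext_evalAt {f g : SmoothPeriodic Γ} (h : ∀ x, evalAt x f = evalAt x g) : f = g :=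
  Subtype.ext (funext h)

/-- The derivative in the direction `v`, as a derivation. -/
def dirDeriv (v : E) : Derivation ℝ (SmoothPeriodic Γ) (SmoothPeriodic Γ) :=
  Derivation.mk'
    { toFun f := ⟨fun x => fderiv ℝ f.1 x v, contDiff_fderiv_apply (contDiff f) v,
        fun c hc x => congrArg (· v) (periodic_fderiv (f.2.2 c hc) x)⟩
      map_add' f g := ext_evalAt fun x =>
        congrArg (· v) (fderiv_add (differentiableAt f x) (differentiableAt g x))
      map_smul' r f := ext_evalAt fun x =>
        congrArg (· v) (fderiv_const_smul (differentiableAt f x) r) }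
    fun f g => ext_evalAt fun x =>
      congrArg (· v) (fderiv_mul (differentiableAt f x) (differentiableAt g x))

lemma evalAt_dirDeriv (v : E) (f : SmoothPeriodic Γ) (x : E) :
    evalAt x (dirDeriv v f) = fderiv ℝ f.1 x v := rfl

lemma dirDeriv_comm (v w : E) (f : SmoothPeriodic Γ) :
    dirDeriv v (dirDeriv w f) = dirDeriv w (dirDeriv v f) := by
  refine ext_evalAt fun x => ?_
  have hd : DifferentiableAt ℝ (fderiv ℝ f.1) x :=
    ((contDiff f).fderiv_right (m := (⊤ : ℕ∞)) (by simp)).differentiable (by simp) x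
  have second (a b : E) :
      evalAt x (dirDeriv a (dirDeriv b f)) = fderiv ℝ (fderiv ℝ f.1) x a b := by
    change fderiv ℝ (fun y => fderiv ℝ f.1 y b) x a = _
    simp [fderiv_clm_apply hd (differentiableAt_const b)]
  have hsymm : IsSymmSndFDerivAt ℝ f.1 x := by
    refine (contDiff f).contDiffAt.isSymmSndFDerivAt ?_
    rw [minSmoothness_of_isRCLikeNormedField]
    exact WithTop.coe_le_coe.2 (le_top : (2 : ℕ∞) ≤ ⊤)
  rw [second, second, hsymm.eq]

/-- The restriction of a function on space-time to the time `t`. -/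
def slice (t : ℝ) : SmoothPeriodic (Prod.mk (0 : ℝ) '' Γ) →ₐ[ℝ] SmoothPeriodic Γ where
  toFun F := ⟨fun x => F.1 (t, x), (contDiff F).comp (contDiff_prodMk_right t), fun c hc x => by
    simpa using F.2.2 _ (Set.mem_image_of_mem _ hc) (t, x)⟩
  map_one' := rfl
  map_mul' _ _ := rfl
  map_zero' := rfl
  map_add' _ _ := rfl
  commutes' _ := rfl

lemma slice_dirDeriv (v : E) (t : ℝ) (F : SmoothPeriodic (Prod.mk (0 : ℝ) '' Γ)) :
    slice t (dirDeriv (0, v) F) = dirDeriv v (slice t F) := by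
  refine ext_evalAt fun x => (?_ : fderiv ℝ F.1 (t, x) (0, v) = _)
  have h := (differentiableAt F (t, x)).hasFDerivAt.comp x (hasFDerivAt_prodMk_right t x)
  exact (congrArg (· v) h.fderiv).symm

lemma hasDerivAt_evalAt_slice (F : SmoothPeriodic (Prod.mk (0 : ℝ) '' Γ)) (x : E) (t : ℝ) :
    HasDerivAt (fun s => evalAt x (slice s F)) (evalAt x (slice t (dirDeriv (1, 0) F))) t :=
  (differentiableAt F (t, x)).hasFDerivAt.comp_hasDerivAt t
    ((hasDerivAt_id t).prodMk (hasDerivAt_const t x))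

end SmoothPeriodic

end SmoothPeriodic

section Slab

open SmoothPeriodic

/-- The periods of horizontally periodic functions. -/
def horizontalPeriods : Set V3 := {Pi.single 0 1, Pi.single 1 1}

/-- Smooth horizontally periodic functions. The slab `0 ≤ x₃ ≤ 1` only enters through the cube over
which they are integrated and through `boundaryIdeal`. -/
abbrev SlabFunction : Type := SmoothPeriodic horizontalPeriods

/-- The partial derivatives of slab functions. -/
abbrev slabDeriv (i : Fin 3) : Derivation ℝ SlabFunction SlabFunction := dirDeriv (Pi.single i 1)

lemma slabDeriv_comm (i j : Fin 3) (f : SlabFunction) :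
    slabDeriv i (slabDeriv j f) = slabDeriv j (slabDeriv i f) :=
  dirDeriv_comm _ _ f

local notation "Δ" => laplacian slabDeriv

lemma isCompact_Q3 : IsCompact Q3 := isCompact_Icc

lemma integrableOn_Q3 (f : SlabFunction) : IntegrableOn f.1 Q3 :=
  (SmoothPeriodic.continuous f).continuousOn.integrableOn_compact isCompact_Q3

/-- The integral of a slab function over the unit cube. -/
def cubeIntegral : SlabFunction →ₗ[ℝ] ℝ where
  toFun f := ∫ x in Q3, evalAt x f
  map_add' f g := integral_add (integrableOn_Q3 f) (integrableOn_Q3 g)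
  map_smul' r f := integral_const_mul r f.1

lemma cubeIntegral_mono {f g : SlabFunction} (h : ∀ x ∈ Q3, evalAt x f ≤ evalAt x g) :
    cubeIntegral f ≤ cubeIntegral g :=
  setIntegral_mono_on (integrableOn_Q3 f) (integrableOn_Q3 g) measurableSet_Icc h

lemma cubeIntegral_nonneg {f : SlabFunction} (h : ∀ x ∈ Q3, 0 ≤ evalAt x f) :
    0 ≤ cubeIntegral f :=
  setIntegral_nonneg measurableSet_Icc h

lemma cubeIntegral_algebraMap (r : ℝ) : cubeIntegral (algebraMap ℝ SlabFunction r) = r := by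
  have volume_Q3 : (volume : Measure V3).real Q3 = 1 := by
    simp [Q3, Measure.real, Real.volume_Icc_pi]
  refine (setIntegral_const (μ := volume) (s := Q3) r).trans ?_
  rw [volume_Q3, one_smul]

/-- The ideal of slab functions vanishing on the boundary `x₃ ∈ {0, 1}`. -/
def boundaryIdeal : Ideal SlabFunction where
  carrier := {f | ∀ x, onBdry x → evalAt x f = 0}
  add_mem' hf hg x hx := by rw [map_add, hf x hx, hg x hx, add_zero]
  zero_mem' x _ := map_zero (evalAt x)
  smul_mem' c f hf x hx := by rw [smul_eq_mul, map_mul, hf x hx, mul_zero]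

lemma fderiv_eq_zero_of_eq_zero_on_onBdry {f : V3 → ℝ} (hf : ∀ x, onBdry x → f x = 0) {i : Fin 3}
    (hi : i ≠ 2) {x : V3} (hd : DifferentiableAt ℝ f x) (hx : onBdry x) : pd i f x = 0 := by
  have hline : (fun s : ℝ => f (x + s • (Pi.single i 1 : V3))) = fun _ => 0 := by
    funext s
    exact hf _ (by simpa [onBdry, hi.symm] using hx)
  rw [pd, ← hd.lineDeriv_eq_fderiv, lineDeriv, hline, deriv_const]

lemma slabDeriv_mem_boundaryIdeal {f : SlabFunction} (hf : f ∈ boundaryIdeal) {i : Fin 3}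
    (hi : i ≠ 2) : slabDeriv i f ∈ boundaryIdeal := fun x hx =>
  fderiv_eq_zero_of_eq_zero_on_onBdry hf hi (differentiableAt f x) hx

lemma insertNth_one_eq_add_single (i : Fin 3) (y : Fin 2 → ℝ) :
    (i.insertNth ((1 : V3) i) y : V3) = (i.insertNth ((0 : V3) i) y : V3) + Pi.single i 1 := by
  refine funext (Fin.succAboveCases i ?_ fun j => ?_) <;> simp

lemma cubeIntegral_divergence {F : Fin 3 → SlabFunction} (h : F 2 ∈ boundaryIdeal) :
    cubeIntegral (divergence slabDeriv F) = 0 := by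
  have faces_agree (i : Fin 3) (y : Fin 2 → ℝ) :
      (F i).1 (i.insertNth ((1 : V3) i) y) = (F i).1 (i.insertNth ((0 : V3) i) y) := by
    fin_cases i
    · rw [insertNth_one_eq_add_single]
      exact (F 0).2.2 _ (Or.inl rfl) _
    · rw [insertNth_one_eq_add_single]
      exact (F 1).2.2 _ (Or.inr rfl) _
    · exact (h _ (Or.inr (Fin.insertNth_apply_same (α := fun _ => ℝ) 2 _ y))).trans
        (h _ (Or.inl (Fin.insertNth_apply_same (α := fun _ => ℝ) 2 _ y))).symm
  have eval_divergence (x : V3) : evalAt x (divergence slabDeriv F)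
      = ∑ i, fderiv ℝ (F i).1 x (Pi.single i 1) := by
    simp only [divergence_apply, map_sum, evalAt_dirDeriv]
  have divergence_theorem := integral_divergence_of_hasFDerivAt_off_countable' (n := 2) (E := ℝ)
    (0 : V3) 1 zero_le_one (fun i => (F i).1) (fun i x => fderiv ℝ (F i).1 x) ∅ Set.countable_empty
    (fun i => (SmoothPeriodic.continuous (F i)).continuousOn)
    (fun x _ i => (differentiableAt (F i) x).hasFDerivAt)
    ((integrableOn_Q3 (divergence slabDeriv F)).congr_fun (fun x _ => eval_divergence x)
      measurableSet_Icc)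
  refine (integral_congr_ae (.of_forall eval_divergence)).trans (divergence_theorem.trans ?_)
  exact Finset.sum_eq_zero fun i _ => sub_eq_zero.2 (by simp only [faces_agree])

lemma cubeIntegral_advection {a : Fin 3 → SlabFunction} {f : SlabFunction}
    (ha : divergence slabDeriv a = 0) (haf : a 2 * f ∈ boundaryIdeal) :
    cubeIntegral (advection slabDeriv a f) = 0 := by
  rw [← cubeIntegral_divergence (F := fun k => a k * f) haf, divergence_mul_right, ha, mul_zero,
    add_zero]

lemma cubeIntegral_sum_slabDeriv_sq {f : SlabFunction} (hf : f * slabDeriv 2 f ∈ boundaryIdeal) :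
    cubeIntegral (∑ k, slabDeriv k f ^ 2) = -cubeIntegral (f * Δ f) := by
  have green : divergence slabDeriv (fun k => slabDeriv k f * f)
      = ∑ k, slabDeriv k f ^ 2 + f * Δ f := by
    rw [divergence_mul_right, advection_apply, divergence_apply, ← laplacian_apply]
    simp only [sq]
  rw [eq_neg_iff_add_eq_zero, ← map_add, ← green]
  exact cubeIntegral_divergence (mul_comm f (slabDeriv 2 f) ▸ hf)

/-- `f` satisfies a homogeneous Dirichlet or Neumann condition on the boundary. -/
def IsDirichletOrNeumann (f : SlabFunction) : Prop :=
  f ∈ boundaryIdeal ∨ slabDeriv 2 f ∈ boundaryIdeal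

lemma cubeIntegral_sum_sum_slabDeriv_sq {f : SlabFunction} (hf : IsDirichletOrNeumann f) :
    cubeIntegral (∑ j, ∑ k, slabDeriv j (slabDeriv k f) ^ 2) = cubeIntegral (Δ f ^ 2) := by
  set V : Fin 3 → SlabFunction := fun k => slabDeriv k f with hV
  have flux_eq : V 2 * Δ f - advection slabDeriv V (V 2)
      = ∑ i : Fin 2, (slabDeriv 2 f * slabDeriv i.castSucc (slabDeriv i.castSucc f)
          - slabDeriv i.castSucc f * slabDeriv i.castSucc (slabDeriv 2 f)) := by
    simp only [hV, advection_apply, laplacian_apply, Fin.sum_univ_three, Fin.sum_univ_two]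
    simp only [Fin.castSucc_zero, Fin.castSucc_one]
    ring
  have flux_mem : V 2 * Δ f - advection slabDeriv V (V 2) ∈ boundaryIdeal := by
    rw [flux_eq]
    refine Ideal.sum_mem _ fun i _ => ?_
    have hi : i.castSucc ≠ (2 : Fin 3) := i.castSucc_lt_last.ne
    rcases hf with hf | hf
    · have hif := slabDeriv_mem_boundaryIdeal hf hi
      exact sub_mem (Ideal.mul_mem_left _ _ (slabDeriv_mem_boundaryIdeal hif hi))
        (Ideal.mul_mem_right _ _ hif)
    · exact sub_mem (Ideal.mul_mem_right _ _ hf)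
        (Ideal.mul_mem_left _ _ (slabDeriv_mem_boundaryIdeal hf hi))
  rw [laplacian_sq slabDeriv_comm, map_add, cubeIntegral_divergence flux_mem, add_zero]

/-- The density `|f|² + |∇f|² + |∇²f|²` of the squared `H²` norm. -/
def sobolevDensity (f : SlabFunction) : SlabFunction :=
  f ^ 2 + ∑ k, slabDeriv k f ^ 2 + ∑ j, ∑ k, slabDeriv j (slabDeriv k f) ^ 2

lemma evalAt_sobolevDensity (f : SlabFunction) (x : V3) : evalAt x (sobolevDensity f)
    = evalAt x f ^ 2 + ∑ k, evalAt x (slabDeriv k f) ^ 2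
      + ∑ j, ∑ k, evalAt x (slabDeriv j (slabDeriv k f)) ^ 2 := by
  simp only [sobolevDensity, map_add, map_sum, map_pow]

lemma evalAt_sobolevDensity_nonneg (f : SlabFunction) (x : V3) :
    0 ≤ evalAt x (sobolevDensity f) := by
  rw [evalAt_sobolevDensity]
  exact add_nonneg (add_nonneg (sq_nonneg _) (Finset.sum_nonneg fun k _ => sq_nonneg _))
    (Finset.sum_nonneg fun j _ => Finset.sum_nonneg fun k _ => sq_nonneg _)

lemma cubeIntegral_sobolevDensity_le {f : SlabFunction} (hf : IsDirichletOrNeumann f) :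
    cubeIntegral (sobolevDensity f) ≤ 2 * cubeIntegral (f ^ 2 + Δ f ^ 2) := by
  have flux_mem : f * slabDeriv 2 f ∈ boundaryIdeal :=
    hf.elim (Ideal.mul_mem_right _ _) (Ideal.mul_mem_left _ _)
  have young : 0 ≤ cubeIntegral ((f + Δ f) ^ 2) :=
    cubeIntegral_nonneg fun x _ => by rw [map_pow]; positivity
  have sq_nonneg (g : SlabFunction) : 0 ≤ cubeIntegral (g ^ 2) :=
    cubeIntegral_nonneg fun x _ => by rw [map_pow]; positivity
  have expand : (f + Δ f) ^ 2 = f ^ 2 + Δ f ^ 2 + (2 : ℝ) • (f * Δ f) := by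
    rw [two_smul]; ring
  rw [expand, map_add, map_add, map_smul, smul_eq_mul] at young
  rw [sobolevDensity, map_add, map_add, map_add, cubeIntegral_sum_slabDeriv_sq flux_mem,
    cubeIntegral_sum_sum_slabDeriv_sq hf]
  linarith [sq_nonneg f, sq_nonneg (Δ f)]

/-- Velocity and magnetic field are divergence-free and satisfy the boundary conditions
`u₃ = ∂₃u₁ = ∂₃u₂ = 0`, `B₁ = B₂ = 0` and `ΔB₁ = ΔB₂ = 0`. -/
structure IsAdmissible (u B : Fin 3 → SlabFunction) : Prop where
  divergence_velocity : divergence slabDeriv u = 0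
  divergence_magnetic : divergence slabDeriv B = 0
  velocity_normal : u 2 ∈ boundaryIdeal
  velocity_shear : ∀ i ≠ 2, slabDeriv 2 (u i) ∈ boundaryIdeal
  magnetic_tangential : ∀ i ≠ 2, B i ∈ boundaryIdeal
  laplacian_magnetic_tangential : ∀ i ≠ 2, Δ (B i) ∈ boundaryIdeal

lemma slabDeriv_two_mem_of_divergence_eq_zero {a : Fin 3 → SlabFunction}
    (ha : divergence slabDeriv a = 0) (htan : ∀ i ≠ 2, a i ∈ boundaryIdeal) :
    slabDeriv 2 (a 2) ∈ boundaryIdeal := by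
  rw [divergence_apply, Fin.sum_univ_three] at ha
  rw [eq_neg_of_add_eq_zero_right ha]
  exact neg_mem (add_mem (slabDeriv_mem_boundaryIdeal (htan 0 (by decide)) (by decide))
    (slabDeriv_mem_boundaryIdeal (htan 1 (by decide)) (by decide)))

namespace IsAdmissible

variable {u B u' B' : Fin 3 → SlabFunction}

lemma sub (h : IsAdmissible u B) (h' : IsAdmissible u' B') : IsAdmissible (u - u') (B - B') where
  divergence_velocity := by rw [map_sub, h.divergence_velocity, h'.divergence_velocity, sub_zero]
  divergence_magnetic := by rw [map_sub, h.divergence_magnetic, h'.divergence_magnetic, sub_zero]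
  velocity_normal := sub_mem h.velocity_normal h'.velocity_normal
  velocity_shear i hi := by
    rw [Pi.sub_apply, map_sub]
    exact sub_mem (h.velocity_shear i hi) (h'.velocity_shear i hi)
  magnetic_tangential i hi := sub_mem (h.magnetic_tangential i hi) (h'.magnetic_tangential i hi)
  laplacian_magnetic_tangential i hi := by
    rw [Pi.sub_apply, map_sub]
    exact sub_mem (h.laplacian_magnetic_tangential i hi) (h'.laplacian_magnetic_tangential i hi)

lemma laplacian_velocity_normal (h : IsAdmissible u B) : Δ (u 2) ∈ boundaryIdeal := by
  have divergence_shear : divergence slabDeriv (fun i => slabDeriv 2 (u i)) = 0 := by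
    rw [← map_zero (slabDeriv 2), ← h.divergence_velocity]
    simp only [divergence_apply, map_sum, slabDeriv_comm 2]
  have tangential (i : Fin 3) (hi : i ≠ 2) : slabDeriv i (slabDeriv i (u 2)) ∈ boundaryIdeal :=
    slabDeriv_mem_boundaryIdeal (slabDeriv_mem_boundaryIdeal h.velocity_normal hi) hi
  rw [laplacian_apply, Fin.sum_univ_three]
  exact add_mem (add_mem (tangential 0 (by decide)) (tangential 1 (by decide)))
    (slabDeriv_two_mem_of_divergence_eq_zero divergence_shear h.velocity_shear)

lemma isDirichletOrNeumann_velocity (h : IsAdmissible u B) (i : Fin 3) :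
    IsDirichletOrNeumann (u i) := by
  rcases eq_or_ne i 2 with rfl | hi
  · exact Or.inl h.velocity_normal
  · exact Or.inr (h.velocity_shear i hi)

lemma isDirichletOrNeumann_magnetic (h : IsAdmissible u B) (i : Fin 3) :
    IsDirichletOrNeumann (B i) := by
  rcases eq_or_ne i 2 with rfl | hi
  · exact Or.inr
      (slabDeriv_two_mem_of_divergence_eq_zero h.divergence_magnetic h.magnetic_tangential)
  · exact Or.inl (h.magnetic_tangential i hi)

lemma cubeIntegral_sum_sobolevDensity_le (h : IsAdmissible u B) :
    cubeIntegral (∑ i, (sobolevDensity (u i) + sobolevDensity (B i)))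
      ≤ 2 * cubeIntegral (energyDensity slabDeriv u B) := by
  have energyDensity_eq : energyDensity slabDeriv u B
      = ∑ i, ((u i ^ 2 + Δ (u i) ^ 2) + (B i ^ 2 + Δ (B i) ^ 2)) := by
    simp only [energyDensity, pairing, Function.comp_apply, ← Finset.sum_add_distrib]
    exact Finset.sum_congr rfl fun i _ => by ring
  rw [energyDensity_eq, map_sum, map_sum, Finset.mul_sum]
  refine Finset.sum_le_sum fun i _ => ?_
  rw [map_add, map_add, mul_add]
  exact add_le_add (cubeIntegral_sobolevDensity_le (h.isDirichletOrNeumann_velocity i))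
    (cubeIntegral_sobolevDensity_le (h.isDirichletOrNeumann_magnetic i))

end IsAdmissible

section Power

variable {u B g h gt ht ρ σ : Fin 3 → SlabFunction} {r : SlabFunction}

lemma cubeIntegral_pairing_of_transport (hu : divergence slabDeriv u = 0)
    (hB : divergence slabDeriv B = 0) (hg : divergence slabDeriv g = 0)
    (hu₂ : u 2 ∈ boundaryIdeal) (hg₂ : g 2 ∈ boundaryIdeal) (hh : ∀ i ≠ 2, h i ∈ boundaryIdeal)
    (hgt : ∀ i, gt i = ρ i - advection slabDeriv u (g i) + advection slabDeriv B (h i)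
      - slabDeriv i r)
    (hht : ∀ i, ht i = σ i - advection slabDeriv u (h i) + advection slabDeriv B (g i)) :
    cubeIntegral (pairing g h gt ht) = cubeIntegral (pairing g h ρ σ) := by
  have cross_mem : ∑ i, g i * h i ∈ boundaryIdeal := by
    refine Ideal.sum_mem _ fun i _ => ?_
    rcases eq_or_ne i 2 with rfl | hi
    · exact Ideal.mul_mem_right _ _ hg₂
    · exact Ideal.mul_mem_left _ _ (hh i hi)
  rw [pairing_eq_of_transport hgt hht, map_sub, map_add, map_sub, map_smul,
    cubeIntegral_advection hu (Ideal.mul_mem_right _ _ hu₂),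
    cubeIntegral_advection hB (Ideal.mul_mem_left _ _ cross_mem),
    cubeIntegral_advection hg (Ideal.mul_mem_right _ _ hg₂), smul_zero, sub_zero, add_zero,
    sub_zero]

lemma IsAdmissible.cubeIntegral_power (hgh : IsAdmissible g h)
    (hu : divergence slabDeriv u = 0) (hB : divergence slabDeriv B = 0)
    (hu₂ : u 2 ∈ boundaryIdeal)
    (hgt : ∀ i, gt i = ρ i - advection slabDeriv u (g i) + advection slabDeriv B (h i)
      - slabDeriv i r)
    (hht : ∀ i, ht i = σ i - advection slabDeriv u (h i) + advection slabDeriv B (g i)) :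
    cubeIntegral (pairing g h gt ht + pairing (Δ ∘ g) (Δ ∘ h) (Δ ∘ gt) (Δ ∘ ht))
      = cubeIntegral (forcingPower slabDeriv u B g h ρ σ) := by
  have divergence_laplacian_g : divergence slabDeriv (Δ ∘ g) = 0 :=
    (divergence_laplacian slabDeriv_comm g).trans (by rw [hgh.divergence_velocity, map_zero])
  rw [forcingPower, map_add, map_add,
    cubeIntegral_pairing_of_transport hu hB hgh.divergence_velocity hu₂ hgh.velocity_normal
      hgh.magnetic_tangential hgt hht]
  congr 1
  refine cubeIntegral_pairing_of_transport (r := Δ r) hu hB divergence_laplacian_g hu₂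
    hgh.laplacian_velocity_normal hgh.laplacian_magnetic_tangential (fun i => ?_) (fun i => ?_)
  · simp only [Function.comp_apply, hgt, map_sub, map_add, laplacianForcing, laplacianCommutator,
      derivation_laplacian_comm (slabDeriv_comm i)]
    ring
  · simp only [Function.comp_apply, hht, map_sub, map_add, laplacianForcing, laplacianCommutator]
    ring

end Power

/-- All partial derivatives of `f` of order at most `n` are bounded by `s` at the point `x`. -/
def DerivBound (s : ℝ) (x : V3) : ℕ → SlabFunction → Prop
  | 0, f => |evalAt x f| ≤ s
  | n + 1, f => |evalAt x f| ≤ s ∧ ∀ i, DerivBound s x n (slabDeriv i f)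

namespace DerivBound

variable {n : ℕ} {s s' A : ℝ} {x : V3} {f g : SlabFunction}

lemma abs_le (h : DerivBound s x n f) : |evalAt x f| ≤ s := by
  cases n with
  | zero => exact h
  | succ n => exact h.1

lemma nonneg (h : DerivBound s x n f) : 0 ≤ s := (abs_nonneg _).trans h.abs_le

protected lemma slabDeriv (h : DerivBound s x (n + 1) f) (i : Fin 3) :
    DerivBound s x n (slabDeriv i f) :=
  h.2 i

lemma of_succ (h : DerivBound s x (n + 1) f) : DerivBound s x n f := by
  induction n generalizing f with
  | zero => exact h.abs_le
  | succ n ih => exact ⟨h.1, fun i => ih (h.2 i)⟩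

lemma of_le {m : ℕ} (hmn : m ≤ n) (h : DerivBound s x n f) : DerivBound s x m f :=
  Nat.decreasingInduction (motive := fun k _ => DerivBound s x k f) (fun _ _ => of_succ) h hmn

lemma mono (hs : s ≤ s') (h : DerivBound s x n f) : DerivBound s' x n f := by
  induction n generalizing f with
  | zero => exact h.trans hs
  | succ n ih => exact ⟨h.1.trans hs, fun i => ih (h.2 i)⟩

lemma of_pdList (h : ∀ l : List (Fin 3), l.length ≤ n → |pdList l f.1 x| ≤ s) :
    DerivBound s x n f := by
  induction n generalizing f with
  | zero => exact h [] le_rfl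
  | succ n ih =>
    refine ⟨h [] (Nat.zero_le _), fun i => ih fun l hl => ?_⟩
    have hli := h (l ++ [i]) (by simpa using hl)
    rwa [pdList, List.foldr_append] at hli

protected lemma add (hf : DerivBound s x n f) (hg : DerivBound s' x n g) :
    DerivBound (s + s') x n (f + g) := by
  induction n generalizing f g with
  | zero => exact (abs_add_le _ _).trans (add_le_add hf hg)
  | succ n ih =>
    refine ⟨(abs_add_le _ _).trans (add_le_add hf.1 hg.1), fun i => ?_⟩
    rw [map_add]
    exact ih (hf.2 i) (hg.2 i)

protected lemma smul (c : ℝ) (hf : DerivBound s x n f) : DerivBound (|c| * s) x n (c • f) := by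
  have eval_le {g : SlabFunction} (hg : |evalAt x g| ≤ s) : |evalAt x (c • g)| ≤ |c| * s := by
    rw [map_smul, smul_eq_mul, abs_mul]
    exact mul_le_mul_of_nonneg_left hg (abs_nonneg c)
  induction n generalizing f with
  | zero => exact eval_le hf
  | succ n ih =>
    refine ⟨eval_le hf.1, fun i => ?_⟩
    rw [Derivation.map_smul]
    exact ih (hf.2 i)

protected lemma sub (hf : DerivBound s x n f) (hg : DerivBound s' x n g) :
    DerivBound (s + s') x n (f - g) := by
  simpa [sub_eq_add_neg] using hf.add (hg.smul (-1))

protected lemma sum {f : Fin 3 → SlabFunction} (hf : ∀ i, DerivBound s x n (f i)) :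
    DerivBound (3 * s) x n (∑ i, f i) := by
  rw [Fin.sum_univ_three]
  exact (((hf 0).add (hf 1)).add (hf 2)).mono (by linarith)

protected lemma mul (hf : DerivBound A x n f) (hg : DerivBound s x n g) :
    DerivBound (2 ^ n * (A * s)) x n (f * g) := by
  have eval_le {f g : SlabFunction} (hf : |evalAt x f| ≤ A) (hg : |evalAt x g| ≤ s) :
      |evalAt x (f * g)| ≤ A * s := by
    rw [map_mul, abs_mul]
    exact mul_le_mul hf hg (abs_nonneg _) ((abs_nonneg _).trans hf)
  induction n generalizing f g with
  | zero =>
    rw [pow_zero, one_mul]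
    exact eval_le hf hg
  | succ n ih =>
    refine ⟨(eval_le hf.1 hg.1).trans ?_, fun i => ?_⟩
    · exact le_mul_of_one_le_left (mul_nonneg hf.nonneg hg.nonneg) (one_le_pow₀ one_le_two)
    · rw [Derivation.leibniz, smul_eq_mul, smul_eq_mul, mul_comm g]
      exact ((ih hf.of_succ (hg.2 i)).add (ih (hf.2 i) hg.of_succ)).mono
        (by rw [pow_succ]; linarith)

protected lemma laplacian (hf : DerivBound s x (n + 2) f) : DerivBound (3 * s) x n (Δ f) := by
  rw [laplacian_apply]
  exact DerivBound.sum fun k => (hf.slabDeriv k).slabDeriv k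

protected lemma advection {a : Fin 3 → SlabFunction} (ha : ∀ j, DerivBound A x n (a j))
    (hf : DerivBound s x (n + 1) f) :
    DerivBound (3 * (2 ^ n * (A * s))) x n (advection slabDeriv a f) := by
  rw [advection_apply]
  exact DerivBound.sum fun j => (ha j).mul (hf.slabDeriv j)

lemma abs_laplacianCommutator_le {a : Fin 3 → SlabFunction} (ha : ∀ j, DerivBound A x 2 (a j))
    (hf : DerivBound s x 2 f) :
    |evalAt x (laplacianCommutator slabDeriv a f)| ≤ 27 * (A * s) := by
  have zeroth : DerivBound (3 * (2 ^ 0 * (3 * A * s))) x 0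
      (∑ j, Δ (a j) * slabDeriv j f) :=
    DerivBound.sum fun j => (ha j).laplacian.mul (hf.slabDeriv j |>.of_succ)
  have first : DerivBound (3 * (3 * (2 ^ 0 * (A * s)))) x 0
      (∑ j, ∑ k, slabDeriv k (a j) * slabDeriv k (slabDeriv j f)) :=
    DerivBound.sum fun j => DerivBound.sum fun k =>
      ((ha j).slabDeriv k).of_succ.mul ((hf.slabDeriv j).slabDeriv k)
  rw [laplacianCommutator_eq slabDeriv_comm, two_mul]
  exact (zeroth.add (first.add first)).abs_le.trans (by linarith)

protected lemma perturbationForcing {κ : ℝ} {v w b p q : Fin 3 → SlabFunction} {i : Fin 3}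
    (hv : DerivBound A x (n + 2) (v i)) (hw : ∀ j, DerivBound s x n (w j))
    (hb : ∀ j, DerivBound s x n (b j)) (hp : DerivBound A x (n + 1) (p i))
    (hq : DerivBound A x (n + 1) (q i)) :
    DerivBound (3 * (|κ| * A) + 6 * 2 ^ n * (s * A)) x n
      (perturbationForcing slabDeriv κ v w b p q i) :=
  (((hv.laplacian.smul κ).sub (DerivBound.advection hw hp)).add
    (DerivBound.advection hb hq)).mono (by linarith)

lemma abs_laplacianForcing_le {F : ℝ} {u B g h ρ : Fin 3 → SlabFunction} {i : Fin 3}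
    (hu : ∀ j, DerivBound A x 2 (u j)) (hB : ∀ j, DerivBound A x 2 (B j))
    (hg : DerivBound s x 2 (g i)) (hh : DerivBound s x 2 (h i)) (hρ : DerivBound F x 2 (ρ i)) :
    |evalAt x (laplacianForcing slabDeriv u B g h ρ i)| ≤ 3 * F + 54 * (A * s) := by
  have hΔρ : |evalAt x (Δ (ρ i))| ≤ 3 * F := hρ.laplacian.abs_le
  have hug := abs_laplacianCommutator_le hu hg
  have hBh := abs_laplacianCommutator_le hB hh
  rw [laplacianForcing, map_add, map_sub]
  refine (abs_add_le _ _).trans ((add_le_add (abs_sub _ _) le_rfl).trans ?_)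
  linarith

lemma of_sobolevDensity_le {S : ℝ} (h : evalAt x (sobolevDensity f) ≤ S) :
    DerivBound (√S) x 2 f := by
  rw [evalAt_sobolevDensity] at h
  have first_nonneg : 0 ≤ ∑ k, evalAt x (slabDeriv k f) ^ 2 :=
    Finset.sum_nonneg fun k _ => sq_nonneg _
  have second_nonneg : 0 ≤ ∑ j, ∑ k, evalAt x (slabDeriv j (slabDeriv k f)) ^ 2 :=
    Finset.sum_nonneg fun j _ => Finset.sum_nonneg fun k _ => sq_nonneg _
  have first_le (k : Fin 3) :
      evalAt x (slabDeriv k f) ^ 2 ≤ ∑ k, evalAt x (slabDeriv k f) ^ 2 :=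
    single_sq_le_sum (fun k => evalAt x (slabDeriv k f)) k
  have second_le (j k : Fin 3) : evalAt x (slabDeriv j (slabDeriv k f)) ^ 2
      ≤ ∑ j, ∑ k, evalAt x (slabDeriv j (slabDeriv k f)) ^ 2 := by
    simp only [← Fintype.sum_prod_type']
    exact single_sq_le_sum (fun p : Fin 3 × Fin 3 => evalAt x (slabDeriv p.1 (slabDeriv p.2 f)))
      (j, k)
  refine ⟨Real.abs_le_sqrt ?_, fun k => ⟨Real.abs_le_sqrt ?_, fun j => Real.abs_le_sqrt ?_⟩⟩
  · linarith
  · linarith [first_le k, sq_nonneg (evalAt x f)]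
  · linarith [second_le j k, sq_nonneg (evalAt x f)]

end DerivBound

section EnergyRate

variable {M κ s G F F₀ F₂ ν μ : ℝ} {x : V3} {u B u₀ B₀ g h ρ σ : Fin 3 → SlabFunction}

lemma evalAt_pairing_le (hg : ∀ i, |evalAt x (g i)| ≤ G) (hh : ∀ i, |evalAt x (h i)| ≤ G)
    (hρ : ∀ i, |evalAt x (ρ i)| ≤ F) (hσ : ∀ i, |evalAt x (σ i)| ≤ F) :
    evalAt x (pairing g h ρ σ) ≤ 6 * (G * F) := by
  have mul_le {a b : ℝ} (ha : |a| ≤ G) (hb : |b| ≤ F) : a * b ≤ G * F :=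
    (le_abs_self _).trans <| (abs_mul a b).trans_le <|
      mul_le_mul ha hb (abs_nonneg b) ((abs_nonneg a).trans ha)
  have summand_le (i : Fin 3) : evalAt x (g i * ρ i + h i * σ i) ≤ 2 * (G * F) := by
    rw [map_add, map_mul, map_mul, two_mul]
    exact add_le_add (mul_le (hg i) (hρ i)) (mul_le (hh i) (hσ i))
  rw [pairing, map_sum, Fin.sum_univ_three]
  linarith [summand_le 0, summand_le 1, summand_le 2]

lemma evalAt_forcingPower_le (hu : ∀ i, DerivBound M x 2 (u i)) (hB : ∀ i, DerivBound M x 2 (B i))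
    (hg : ∀ i, DerivBound s x 2 (g i)) (hh : ∀ i, DerivBound s x 2 (h i))
    (hρ₀ : ∀ i, |evalAt x (ρ i)| ≤ F₀) (hσ₀ : ∀ i, |evalAt x (σ i)| ≤ F₀)
    (hρ₂ : ∀ i, DerivBound F₂ x 2 (ρ i)) (hσ₂ : ∀ i, DerivBound F₂ x 2 (σ i)) :
    evalAt x (forcingPower slabDeriv u B g h ρ σ)
      ≤ 6 * (s * F₀) + 6 * (3 * s * (3 * F₂ + 54 * (M * s))) := by
  rw [forcingPower, map_add]
  exact add_le_add
    (evalAt_pairing_le (fun i => (hg i).abs_le) (fun i => (hh i).abs_le) hρ₀ hσ₀)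
    (evalAt_pairing_le (fun i => (hg i).laplacian.abs_le) (fun i => (hh i).laplacian.abs_le)
      (fun i => DerivBound.abs_laplacianForcing_le hu hB (hg i) (hh i) (hρ₂ i))
      (fun i => DerivBound.abs_laplacianForcing_le hu hB (hh i) (hg i) (hσ₂ i)))

lemma evalAt_forcingPower_perturbationForcing_le (hu : ∀ i, DerivBound M x 4 (u i))
    (hB : ∀ i, DerivBound M x 4 (B i)) (hu₀ : ∀ i, DerivBound M x 3 (u₀ i))
    (hB₀ : ∀ i, DerivBound M x 3 (B₀ i)) (hg : ∀ i, DerivBound s x 2 (g i))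
    (hh : ∀ i, DerivBound s x 2 (h i)) (hν : |ν| ≤ κ) (hμ : |μ| ≤ κ) :
    evalAt x (forcingPower slabDeriv u B g h (perturbationForcing slabDeriv ν u g h u₀ B₀)
        (perturbationForcing slabDeriv μ B g h B₀ u₀))
      ≤ M * (2394 * s ^ 2 + 90 * κ ^ 2) := by
  have hM : 0 ≤ M := (hu 0).nonneg
  have forcing {n : ℕ} (hn : n ≤ 2) {c : ℝ} (hc : |c| ≤ κ) {v p q : Fin 3 → SlabFunction}
      (hv : ∀ i, DerivBound M x 4 (v i)) (hp : ∀ i, DerivBound M x 3 (p i))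
      (hq : ∀ i, DerivBound M x 3 (q i)) (i : Fin 3) :
      DerivBound (3 * (κ * M) + 6 * 2 ^ n * (s * M)) x n
        (perturbationForcing slabDeriv c v g h p q i) :=
    (DerivBound.perturbationForcing ((hv i).of_le (by omega)) (fun j => (hg j).of_le hn)
      (fun j => (hh j).of_le hn) ((hp i).of_le (by omega)) ((hq i).of_le (by omega))).mono
      (by gcongr)
  have power_le := evalAt_forcingPower_le
    (fun i => (hu i).of_le (by omega)) (fun i => (hB i).of_le (by omega)) hg hh
    (fun i => (forcing zero_le_two hν hu hu₀ hB₀ i).abs_le)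
    (fun i => (forcing zero_le_two hμ hB hB₀ hu₀ i).abs_le)
    (forcing le_rfl hν hu hu₀ hB₀) (forcing le_rfl hμ hB hB₀ hu₀)
  nlinarith [power_le, mul_nonneg hM (sq_nonneg (s - κ))]

lemma IsAdmissible.cubeIntegral_forcingPower_le (hgh : IsAdmissible g h)
    (hu : ∀ x ∈ Q3, ∀ i, DerivBound M x 4 (u i)) (hB : ∀ x ∈ Q3, ∀ i, DerivBound M x 4 (B i))
    (hu₀ : ∀ x ∈ Q3, ∀ i, DerivBound M x 3 (u₀ i)) (hB₀ : ∀ x ∈ Q3, ∀ i, DerivBound M x 3 (B₀ i)) :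
    cubeIntegral (forcingPower slabDeriv u B g h (perturbationForcing slabDeriv ν u g h u₀ B₀)
        (perturbationForcing slabDeriv μ B g h B₀ u₀))
      ≤ M * (4788 * cubeIntegral (energyDensity slabDeriv g h) + 90 * (ν ^ 2 + μ ^ 2)) := by
  have hM : 0 ≤ M := (hu 0 ⟨le_rfl, zero_le_one⟩ 0).nonneg
  set S := ∑ i, (sobolevDensity (g i) + sobolevDensity (h i)) with hS
  have summand_nonneg (i : Fin 3) (x : V3) :
      0 ≤ evalAt x (sobolevDensity (g i) + sobolevDensity (h i)) :=
    add_nonneg (evalAt_sobolevDensity_nonneg _ x) (evalAt_sobolevDensity_nonneg _ x)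
  have summand_le (i : Fin 3) (x : V3) :
      evalAt x (sobolevDensity (g i)) + evalAt x (sobolevDensity (h i)) ≤ evalAt x S := by
    rw [hS, map_sum, ← map_add]
    exact Finset.single_le_sum
      (f := fun i => evalAt x (sobolevDensity (g i) + sobolevDensity (h i)))
      (fun i _ => summand_nonneg i x) (Finset.mem_univ i)
  have pointwise (x : V3) (hx : x ∈ Q3) :
      evalAt x (forcingPower slabDeriv u B g h (perturbationForcing slabDeriv ν u g h u₀ B₀)
        (perturbationForcing slabDeriv μ B g h B₀ u₀))
      ≤ evalAt x (M • ((2394 : ℝ) • S + algebraMap ℝ SlabFunction (90 * (ν ^ 2 + μ ^ 2)))) := by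
    have hg (i : Fin 3) : DerivBound √(evalAt x S) x 2 (g i) := .of_sobolevDensity_le <|
      (le_add_of_nonneg_right (evalAt_sobolevDensity_nonneg (h i) x)).trans (summand_le i x)
    have hh (i : Fin 3) : DerivBound √(evalAt x S) x 2 (h i) := .of_sobolevDensity_le <|
      (le_add_of_nonneg_left (evalAt_sobolevDensity_nonneg (g i) x)).trans (summand_le i x)
    have hS_nonneg : 0 ≤ evalAt x S := (add_nonneg (evalAt_sobolevDensity_nonneg (g 0) x)
      (evalAt_sobolevDensity_nonneg (h 0) x)).trans (summand_le 0 x)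
    have power_le := evalAt_forcingPower_perturbationForcing_le (hu x hx) (hB x hx) (hu₀ x hx)
      (hB₀ x hx) hg hh (Real.abs_le_sqrt (le_add_of_nonneg_right (sq_nonneg μ)))
      (Real.abs_le_sqrt (le_add_of_nonneg_left (sq_nonneg ν)))
    rw [Real.sq_sqrt hS_nonneg, Real.sq_sqrt (add_nonneg (sq_nonneg ν) (sq_nonneg μ))] at power_le
    simpa only [map_smul, map_add, AlgHom.commutes, Algebra.algebraMap_self, RingHom.id_apply,
      smul_eq_mul] using power_le
  refine (cubeIntegral_mono pointwise).trans ?_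
  rw [map_smul, map_add, map_smul, cubeIntegral_algebraMap, smul_eq_mul, smul_eq_mul]
  have hSE : cubeIntegral S ≤ _ := hgh.cubeIntegral_sum_sobolevDensity_le
  exact mul_le_mul_of_nonneg_left (by linarith) hM

end EnergyRate

lemma evalAt_slabDeriv_eq_zero {f : SlabFunction} (hf : ∀ x ∈ Q3, evalAt x f = 0) (i : Fin 3)
    {x : V3} (hx : x ∈ Q3) : evalAt x (slabDeriv i f) = 0 := by
  have uniqueDiffOn_Q3 : UniqueDiffOn ℝ Q3 := by
    rw [Q3, ← Set.pi_univ_Icc]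
    exact UniqueDiffOn.univ_pi fun _ => uniqueDiffOn_Icc_zero_one
  rw [evalAt_dirDeriv, ← (differentiableAt f x).fderivWithin (uniqueDiffOn_Q3 x hx),
    fderivWithin_congr (f₁ := f.1) (f := fun _ => (0 : ℝ)) hf (hf x hx), fderivWithin_const_apply]
  rfl

lemma cubeIntegral_energyDensity_eq_zero {w b : Fin 3 → SlabFunction}
    (hw : ∀ x ∈ Q3, ∀ i, evalAt x (w i) = 0) (hb : ∀ x ∈ Q3, ∀ i, evalAt x (b i) = 0) :
    cubeIntegral (energyDensity slabDeriv w b) = 0 := by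
  have laplacian_eq_zero {f : SlabFunction} (hf : ∀ x ∈ Q3, evalAt x f = 0) {x : V3} (hx : x ∈ Q3) :
      evalAt x (Δ f) = 0 := by
    rw [laplacian_apply, map_sum]
    exact Finset.sum_eq_zero fun k _ =>
      evalAt_slabDeriv_eq_zero (fun y hy => evalAt_slabDeriv_eq_zero hf k hy) k hx
  refine setIntegral_eq_zero_of_forall_eq_zero fun x hx => ?_
  simp only [energyDensity, pairing, Function.comp_apply, map_add, map_sum, map_mul, hw x hx,
    hb x hx, laplacian_eq_zero (fun y hy => hw y hy _) hx,
    laplacian_eq_zero (fun y hy => hb y hy _) hx, mul_zero, add_zero, Finset.sum_const_zero]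

lemma cubeIntegral_energyDensity_nonneg (w b : Fin 3 → SlabFunction) :
    0 ≤ cubeIntegral (energyDensity slabDeriv w b) := by
  have pairing_self_nonneg (x : V3) (g h : Fin 3 → SlabFunction) :
      0 ≤ evalAt x (pairing g h g h) := by
    rw [pairing, map_sum]
    refine Finset.sum_nonneg fun i _ => ?_
    rw [map_add, map_mul, map_mul]
    exact add_nonneg (mul_self_nonneg _) (mul_self_nonneg _)
  refine cubeIntegral_nonneg fun x _ => ?_
  rw [energyDensity, map_add]
  exact add_nonneg (pairing_self_nonneg x _ _) (pairing_self_nonneg x _ _)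

section SpaceTime

/-- Functions of time and space that are smooth and horizontally periodic in space. -/
abbrev SpaceTimeFunction : Type := SmoothPeriodic (Prod.mk (0 : ℝ) '' horizontalPeriods)

/-- The partial derivatives of space-time functions in space. -/
abbrev spaceTimeDeriv (i : Fin 3) : Derivation ℝ SpaceTimeFunction SpaceTimeFunction :=
  dirDeriv (0, Pi.single i 1)

/-- The partial derivative of space-time functions in time. -/
abbrev timeDeriv : Derivation ℝ SpaceTimeFunction SpaceTimeFunction := dirDeriv (1, 0)

lemma timeDeriv_comm (i : Fin 3) (F : SpaceTimeFunction) :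
    timeDeriv (spaceTimeDeriv i F) = spaceTimeDeriv i (timeDeriv F) :=
  dirDeriv_comm _ _ F

lemma slice_laplacian (t : ℝ) (F : SpaceTimeFunction) :
    slice t (laplacian spaceTimeDeriv F) = Δ (slice t F) := by
  simp only [laplacian_apply, map_sum, slice_dirDeriv]

lemma slice_comp_sub (t : ℝ) (f g : Fin 3 → SpaceTimeFunction) :
    slice t ∘ (f - g) = slice t ∘ f - slice t ∘ g :=
  funext fun i => map_sub (slice t) (f i) (g i)

lemma slice_comp_laplacian (t : ℝ) (f : Fin 3 → SpaceTimeFunction) :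
    slice t ∘ laplacian spaceTimeDeriv ∘ f = Δ ∘ slice t ∘ f :=
  funext fun i => slice_laplacian t (f i)

lemma slice_pairing (t : ℝ) (g h g' h' : Fin 3 → SpaceTimeFunction) :
    slice t (pairing g h g' h')
      = pairing (slice t ∘ g) (slice t ∘ h) (slice t ∘ g') (slice t ∘ h') := by
  simp only [pairing, map_sum, map_add, map_mul, Function.comp_apply]

lemma slice_energyDensity (t : ℝ) (w b : Fin 3 → SpaceTimeFunction) :
    slice t (energyDensity spaceTimeDeriv w b)
      = energyDensity slabDeriv (slice t ∘ w) (slice t ∘ b) := by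
  rw [energyDensity, map_add, slice_pairing, slice_pairing, slice_comp_laplacian,
    slice_comp_laplacian, energyDensity]

lemma hasDerivAt_cubeIntegral_slice (F : SpaceTimeFunction) (t : ℝ) :
    HasDerivAt (fun s => cubeIntegral (slice s F)) (cubeIntegral (slice t (timeDeriv F))) t := by
  obtain ⟨C, hC⟩ := ((isCompact_closedBall t 1).prod isCompact_Q3).exists_bound_of_continuousOn
    (SmoothPeriodic.continuous (timeDeriv F)).continuousOn
  refine (hasDerivAt_integral_of_dominated_loc_of_deriv_le (μ := volume.restrict Q3)
    (F := fun s x => evalAt x (slice s F)) (F' := fun s x => evalAt x (slice s (timeDeriv F)))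
    (bound := fun _ => C) (Metric.closedBall_mem_nhds t one_pos)
    (.of_forall fun s => (SmoothPeriodic.continuous (slice s F)).aestronglyMeasurable)
    (integrableOn_Q3 (slice t F))
    (SmoothPeriodic.continuous (slice t (timeDeriv F))).aestronglyMeasurable
    ?_ (continuousOn_const.integrableOn_compact isCompact_Q3)
    (.of_forall fun x s _ => hasDerivAt_evalAt_slice F x s)).2
  exact (ae_restrict_iff' measurableSet_Icc).2 (.of_forall fun x hx s hs => hC (s, x) ⟨hs, hx⟩)

/-- The energy `∫_Q (|w|² + |b|² + |Δw|² + |Δb|²)` at time `t`. -/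
def energy (w b : Fin 3 → SpaceTimeFunction) (t : ℝ) : ℝ :=
  cubeIntegral (energyDensity slabDeriv (slice t ∘ w) (slice t ∘ b))

lemma hasDerivAt_energy (w b : Fin 3 → SpaceTimeFunction) (t : ℝ) :
    HasDerivAt (energy w b)
      (2 * cubeIntegral
        (pairing (slice t ∘ w) (slice t ∘ b) (slice t ∘ timeDeriv ∘ w) (slice t ∘ timeDeriv ∘ b)
          + pairing (Δ ∘ slice t ∘ w) (Δ ∘ slice t ∘ b)
              (Δ ∘ slice t ∘ timeDeriv ∘ w) (Δ ∘ slice t ∘ timeDeriv ∘ b))) t := by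
  have energy_eq :
      energy w b = fun s => cubeIntegral (slice s (energyDensity spaceTimeDeriv w b)) :=
    funext fun s => congrArg cubeIntegral (slice_energyDensity s w b).symm
  have rate_eq : slice t (timeDeriv (energyDensity spaceTimeDeriv w b))
      = (2 : ℝ) •
        (pairing (slice t ∘ w) (slice t ∘ b) (slice t ∘ timeDeriv ∘ w) (slice t ∘ timeDeriv ∘ b)
          + pairing (Δ ∘ slice t ∘ w) (Δ ∘ slice t ∘ b)
              (Δ ∘ slice t ∘ timeDeriv ∘ w) (Δ ∘ slice t ∘ timeDeriv ∘ b)) := by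
    rw [derivation_energyDensity timeDeriv_comm, map_smul, map_add, slice_pairing,
      slice_pairing]
    simp only [slice_comp_laplacian]
  rw [energy_eq, ← smul_eq_mul, ← map_smul, ← rate_eq]
  exact hasDerivAt_cubeIntegral_slice (energyDensity spaceTimeDeriv w b) t

end SpaceTime

section Stability

/-- A solution on `[0, T]` of the MHD system with total pressure `π`, in transport form, whose
velocity and magnetic field satisfy the boundary conditions of `IsAdmissible`. -/
structure IsMHDFlow (ν μ T : ℝ) (u B : Fin 3 → SpaceTimeFunction) (π : ℝ → SlabFunction) :
    Prop where
  isAdmissible : ∀ t ∈ Set.Icc 0 T, IsAdmissible (slice t ∘ u) (slice t ∘ B)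
  momentum : ∀ t ∈ Set.Icc 0 T, ∀ i, slice t (timeDeriv (u i))
    = ν • Δ (slice t (u i)) - advection slabDeriv (slice t ∘ u) (slice t (u i))
      + advection slabDeriv (slice t ∘ B) (slice t (B i)) - slabDeriv i (π t)
  induction : ∀ t ∈ Set.Icc 0 T, ∀ i, slice t (timeDeriv (B i))
    = μ • Δ (slice t (B i)) - advection slabDeriv (slice t ∘ u) (slice t (B i))
      + advection slabDeriv (slice t ∘ B) (slice t (u i))

namespace IsMHDFlow

variable {ν μ T M : ℝ} {u B u₀ B₀ : Fin 3 → SpaceTimeFunction} {π π₀ : ℝ → SlabFunction}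

lemma momentum_sub (h : IsMHDFlow ν μ T u B π) (h₀ : IsMHDFlow 0 0 T u₀ B₀ π₀) {t : ℝ}
    (ht : t ∈ Set.Icc 0 T) (i : Fin 3) :
    slice t (timeDeriv ((u - u₀) i))
      = perturbationForcing slabDeriv ν (slice t ∘ u) (slice t ∘ (u - u₀)) (slice t ∘ (B - B₀))
          (slice t ∘ u₀) (slice t ∘ B₀) i
        - advection slabDeriv (slice t ∘ u) (slice t ((u - u₀) i))
        + advection slabDeriv (slice t ∘ B) (slice t ((B - B₀) i)) - slabDeriv i (π t - π₀ t) := by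
  have velocity := advection_sub_advection slabDeriv (slice t ∘ u) (slice t ∘ u₀)
    (slice t (u i)) (slice t (u₀ i))
  have magnetic := advection_sub_advection slabDeriv (slice t ∘ B) (slice t ∘ B₀)
    (slice t (B i)) (slice t (B₀ i))
  simp only [perturbationForcing, slice_comp_sub, Function.comp_apply, Pi.sub_apply, map_sub,
    h.momentum t ht, h₀.momentum t ht, zero_smul] at velocity magnetic ⊢
  linear_combination magnetic - velocity

lemma induction_sub (h : IsMHDFlow ν μ T u B π) (h₀ : IsMHDFlow 0 0 T u₀ B₀ π₀) {t : ℝ}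
    (ht : t ∈ Set.Icc 0 T) (i : Fin 3) :
    slice t (timeDeriv ((B - B₀) i))
      = perturbationForcing slabDeriv μ (slice t ∘ B) (slice t ∘ (u - u₀)) (slice t ∘ (B - B₀))
          (slice t ∘ B₀) (slice t ∘ u₀) i
        - advection slabDeriv (slice t ∘ u) (slice t ((B - B₀) i))
        + advection slabDeriv (slice t ∘ B) (slice t ((u - u₀) i)) := by
  have velocity := advection_sub_advection slabDeriv (slice t ∘ u) (slice t ∘ u₀)
    (slice t (B i)) (slice t (B₀ i))
  have magnetic := advection_sub_advection slabDeriv (slice t ∘ B) (slice t ∘ B₀)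
    (slice t (u i)) (slice t (u₀ i))
  simp only [perturbationForcing, slice_comp_sub, Function.comp_apply, Pi.sub_apply, map_sub,
    h.induction t ht, h₀.induction t ht, zero_smul] at velocity magnetic ⊢
  linear_combination magnetic - velocity

lemma deriv_energy_sub_le (h : IsMHDFlow ν μ T u B π) (h₀ : IsMHDFlow 0 0 T u₀ B₀ π₀) {t : ℝ}
    (ht : t ∈ Set.Icc 0 T) (hu : ∀ x ∈ Q3, ∀ i, DerivBound M x 4 (slice t (u i)))
    (hB : ∀ x ∈ Q3, ∀ i, DerivBound M x 4 (slice t (B i)))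
    (hu₀ : ∀ x ∈ Q3, ∀ i, DerivBound M x 3 (slice t (u₀ i)))
    (hB₀ : ∀ x ∈ Q3, ∀ i, DerivBound M x 3 (slice t (B₀ i))) :
    deriv (energy (u - u₀) (B - B₀)) t
      ≤ 10 ^ 4 * M * (energy (u - u₀) (B - B₀) t + (ν ^ 2 + μ ^ 2)) := by
  have adm := h.isAdmissible t ht
  have adm_sub : IsAdmissible (slice t ∘ (u - u₀)) (slice t ∘ (B - B₀)) := by
    rw [slice_comp_sub, slice_comp_sub]
    exact adm.sub (h₀.isAdmissible t ht)
  have power_eq := adm_sub.cubeIntegral_power (gt := slice t ∘ timeDeriv ∘ (u - u₀))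
    (ht := slice t ∘ timeDeriv ∘ (B - B₀)) adm.divergence_velocity adm.divergence_magnetic
    adm.velocity_normal (h.momentum_sub h₀ ht) (h.induction_sub h₀ ht)
  have power_le := adm_sub.cubeIntegral_forcingPower_le (u := slice t ∘ u) (B := slice t ∘ B)
    (u₀ := slice t ∘ u₀) (B₀ := slice t ∘ B₀) (ν := ν) (μ := μ) hu hB hu₀ hB₀
  have hM : 0 ≤ M := (hu 0 ⟨le_rfl, zero_le_one⟩ 0).nonneg
  have energy_nonneg : 0 ≤ energy (u - u₀) (B - B₀) t := cubeIntegral_energyDensity_nonneg _ _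
  rw [(hasDerivAt_energy (u - u₀) (B - B₀) t).deriv, power_eq]
  refine (mul_le_mul_of_nonneg_left power_le zero_le_two).trans ?_
  rw [← energy]
  nlinarith [mul_nonneg hM energy_nonneg, mul_nonneg hM (add_nonneg (sq_nonneg ν) (sq_nonneg μ))]

lemma energy_sub_le (h : IsMHDFlow ν μ T u B π) (h₀ : IsMHDFlow 0 0 T u₀ B₀ π₀)
    (hu : ∀ t ∈ Set.Icc 0 T, ∀ x ∈ Q3, ∀ i, DerivBound M x 4 (slice t (u i)))
    (hB : ∀ t ∈ Set.Icc 0 T, ∀ x ∈ Q3, ∀ i, DerivBound M x 4 (slice t (B i)))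
    (hu₀ : ∀ t ∈ Set.Icc 0 T, ∀ x ∈ Q3, ∀ i, DerivBound M x 3 (slice t (u₀ i)))
    (hB₀ : ∀ t ∈ Set.Icc 0 T, ∀ x ∈ Q3, ∀ i, DerivBound M x 3 (slice t (B₀ i)))
    (hu_init : ∀ x ∈ Q3, ∀ i, evalAt x (slice 0 (u i)) = evalAt x (slice 0 (u₀ i)))
    (hB_init : ∀ x ∈ Q3, ∀ i, evalAt x (slice 0 (B i)) = evalAt x (slice 0 (B₀ i)))
    {t : ℝ} (ht : t ∈ Set.Icc 0 T) :
    energy (u - u₀) (B - B₀) t ≤ Real.exp (10 ^ 4 * M * t) * (ν ^ 2 + μ ^ 2) := by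
  have energy_zero : energy (u - u₀) (B - B₀) 0 = 0 := cubeIntegral_energyDensity_eq_zero
    (fun x hx i => by
      rw [Function.comp_apply, Pi.sub_apply, map_sub, map_sub, hu_init x hx i, sub_self])
    (fun x hx i => by
      rw [Function.comp_apply, Pi.sub_apply, map_sub, map_sub, hB_init x hx i, sub_self])
  have gronwall := le_mul_exp_of_hasDerivAt_le (K := 10 ^ 4 * M)
    (fun s => (hasDerivAt_energy (u - u₀) (B - B₀) s).differentiableAt.hasDerivAt.add_const
      (ν ^ 2 + μ ^ 2))
    (fun s hs => have hs := Set.Ico_subset_Icc_self hs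
      h.deriv_energy_sub_le h₀ hs (hu s hs) (hB s hs) (hu₀ s hs) (hB₀ s hs)) t ht
  rw [energy_zero, zero_add, sub_zero, mul_comm] at gronwall
  exact (le_add_of_nonneg_right (add_nonneg (sq_nonneg ν) (sq_nonneg μ))).trans gronwall

end IsMHDFlow

end Stability

section VectorCalculus

/-- The vector field on `ℝ³` with components `V`. -/
def toField (V : Fin 3 → SlabFunction) : V3 → V3 := fun x i => evalAt x (V i)

variable (V W : Fin 3 → SlabFunction) (x : V3)

lemma vdiv_toField : vdiv (toField V) x = evalAt x (divergence slabDeriv V) := by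
  rw [divergence_apply, Fin.sum_univ_three, map_add, map_add]
  rfl

lemma vlap_toField (i : Fin 3) : vlap (toField V) x i = evalAt x (Δ (V i)) := by
  rw [laplacian_apply, Fin.sum_univ_three, map_add, map_add]
  rfl

lemma vcurl_toField : vcurl (toField V) x
    = ![evalAt x (slabDeriv 1 (V 2) - slabDeriv 2 (V 1)),
        evalAt x (slabDeriv 2 (V 0) - slabDeriv 0 (V 2)),
        evalAt x (slabDeriv 0 (V 1) - slabDeriv 1 (V 0))] := rfl

lemma cross_eq_neg_cross (a b : V3) : cross a b = -cross b a := (cross_anticomm b a).symm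

lemma cross_vcurl_toField (i : Fin 3) : cross (vcurl (toField V) x) (toField V x) i
    = evalAt x (advection slabDeriv V (V i) - (1 / 2 : ℝ) • slabDeriv i (∑ k, V k ^ 2)) := by
  have gradient : (1 / 2 : ℝ) • slabDeriv i (∑ k, V k ^ 2) = ∑ k, V k * slabDeriv i (V k) := by
    simp only [map_sum, sq, Derivation.leibniz, smul_eq_mul, ← two_smul ℝ, ← Finset.smul_sum,
      smul_smul]
    norm_num
  rw [gradient, advection_apply, vcurl_toField]
  simp only [cross, toField, Fin.sum_univ_three, map_add, map_sub, map_mul, Matrix.cons_val]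
  fin_cases i <;> simp only [Fin.zero_eta, Fin.mk_one, Fin.reduceFinMk, Matrix.cons_val] <;> ring

lemma vcurl_cross_toField (hV : divergence slabDeriv V = 0) (hW : divergence slabDeriv W = 0)
    (i : Fin 3) : vcurl (fun y => cross (toField V y) (toField W y)) x i
      = evalAt x (advection slabDeriv W (V i) - advection slabDeriv V (W i)) := by
  have hV := congrArg (evalAt x) hV
  have hW := congrArg (evalAt x) hW
  have cross_eq : (fun y => cross (toField V y) (toField W y))
      = toField ![V 1 * W 2 - V 2 * W 1, V 2 * W 0 - V 0 * W 2, V 0 * W 1 - V 1 * W 0] := by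
    funext y j
    fin_cases j <;> rfl
  simp only [divergence_apply, Fin.sum_univ_three, map_add, map_zero] at hV hW
  rw [cross_eq, vcurl_toField, advection_apply, advection_apply]
  simp only [Fin.sum_univ_three, map_add, map_sub, map_mul, Derivation.leibniz, smul_eq_mul,
    Matrix.cons_val]
  fin_cases i <;> simp only [Fin.zero_eta, Fin.mk_one, Fin.reduceFinMk, Matrix.cons_val]
  · linear_combination evalAt x (V 0) * hW - evalAt x (W 0) * hV
  · linear_combination evalAt x (V 1) * hW - evalAt x (W 1) * hV
  · linear_combination evalAt x (V 2) * hW - evalAt x (W 2) * hV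

end VectorCalculus

section Solutions

/-- A smooth, horizontally periodic solution on `[0, T]` of the MHD system with viscosity `ν` and
magnetic diffusivity `μ`; the ideal system is the case `ν = μ = 0`. -/
structure IsMHDSolution (ν μ T : ℝ) (u B : ℝ → V3 → V3) (P : ℝ → V3 → ℝ) : Prop where
  contDiff_velocity : ContDiff ℝ (⊤ : ℕ∞) (Function.uncurry u)
  contDiff_magnetic : ContDiff ℝ (⊤ : ℕ∞) (Function.uncurry B)
  contDiff_pressure : ContDiff ℝ (⊤ : ℕ∞) (Function.uncurry P)
  periodic_velocity : ∀ t, hperV (u t)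
  periodic_magnetic : ∀ t, hperV (B t)
  periodic_pressure : ∀ t, hperS (P t)
  momentum : ∀ t ∈ Set.Icc 0 T, ∀ x, ∀ i, deriv (fun s => u s x i) t - ν * vlap (u t) x i
    + cross (vcurl (u t) x) (u t x) i + cross (B t x) (vcurl (B t) x) i + grad (P t) x i = 0
  divergence_velocity : ∀ t ∈ Set.Icc 0 T, ∀ x, vdiv (u t) x = 0
  induction : ∀ t ∈ Set.Icc 0 T, ∀ x, ∀ i, deriv (fun s => B s x i) t - μ * vlap (B t) x i
    = vcurl (fun y => cross (u t y) (B t y)) x i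
  divergence_magnetic : ∀ t ∈ Set.Icc 0 T, ∀ x, vdiv (B t) x = 0

/-- The boundary conditions `u₃ = ∂₃u₁ = ∂₃u₂ = 0`, `B₁ = B₂ = 0` and `(ΔB)₁ = (ΔB)₂ = 0`. -/
structure SatisfiesBoundaryConditions (u B : V3 → V3) : Prop where
  velocity : ∀ x, onBdry x →
    u x 2 = 0 ∧ pd 2 (fun y => u y 0) x = 0 ∧ pd 2 (fun y => u y 1) x = 0
  magnetic : ∀ x, onBdry x → B x 0 = 0 ∧ B x 1 = 0
  laplacian_magnetic : ∀ x, onBdry x → vlap B x 0 = 0 ∧ vlap B x 1 = 0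

/-- All partial derivatives of order at most `n` of the components of `v` are bounded by `M` on the
unit cube. -/
def HasDerivsBoundedBy (M : ℝ) (n : ℕ) (v : V3 → V3) : Prop :=
  ∀ x ∈ Q3, ∀ l : List (Fin 3), l.length ≤ n → ∀ i, |pdList l (fun y => v y i) x| ≤ M

lemma SatisfiesBoundaryConditions.of_vcurl {u B : V3 → V3} (hu : Differentiable ℝ u)
    (hcurl : ∀ x, onBdry x → u x 2 = 0 ∧ vcurl u x 0 = 0 ∧ vcurl u x 1 = 0)
    (hB : ∀ x, onBdry x → B x 0 = 0 ∧ B x 1 = 0)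
    (hΔB : ∀ x, onBdry x → vlap B x 0 = 0 ∧ vlap B x 1 = 0) : SatisfiesBoundaryConditions u B := by
  refine ⟨fun x hx => ?_, hB, hΔB⟩
  obtain ⟨normal, curl₀, curl₁⟩ := hcurl x hx
  have tangential {i : Fin 3} (hi : i ≠ 2) : pd i (fun y => u y 2) x = 0 :=
    fderiv_eq_zero_of_eq_zero_on_onBdry (fun y hy => (hcurl y hy).1) hi
      (differentiable_pi.1 hu 2 x) hx
  change pd 1 (fun y => u y 2) x - pd 2 (fun y => u y 1) x = 0 at curl₀
  change pd 2 (fun y => u y 0) x - pd 0 (fun y => u y 2) x = 0 at curl₁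
  rw [tangential (by decide)] at curl₀ curl₁
  exact ⟨normal, by linarith, by linarith⟩

lemma forall_ne_two_iff {p : Fin 3 → Prop} : (∀ i ≠ 2, p i) ↔ p 0 ∧ p 1 := by
  simp [Fin.forall_fin_succ]

lemma SatisfiesBoundaryConditions.isAdmissible {U B : Fin 3 → SlabFunction}
    (h : SatisfiesBoundaryConditions (toField U) (toField B))
    (hU : ∀ x, vdiv (toField U) x = 0) (hB : ∀ x, vdiv (toField B) x = 0) : IsAdmissible U B where
  divergence_velocity := ext_evalAt fun x => by rw [← vdiv_toField, hU, map_zero]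
  divergence_magnetic := ext_evalAt fun x => by rw [← vdiv_toField, hB, map_zero]
  velocity_normal x hx := (h.velocity x hx).1
  velocity_shear := forall_ne_two_iff.2
    ⟨fun x hx => (h.velocity x hx).2.1, fun x hx => (h.velocity x hx).2.2⟩
  magnetic_tangential := forall_ne_two_iff.2
    ⟨fun x hx => (h.magnetic x hx).1, fun x hx => (h.magnetic x hx).2⟩
  laplacian_magnetic_tangential := forall_ne_two_iff.2
    ⟨fun x hx => by rw [← vlap_toField]; exact (h.laplacian_magnetic x hx).1,
      fun x hx => by rw [← vlap_toField]; exact (h.laplacian_magnetic x hx).2⟩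

lemma exists_eq_slice {f : ℝ → V3 → ℝ} (hf : ContDiff ℝ (⊤ : ℕ∞) (Function.uncurry f))
    (hper : ∀ t, hperS (f t)) : ∃ F : SpaceTimeFunction, f = fun t x => evalAt x (slice t F) := by
  refine ⟨⟨Function.uncurry f, hf, ?_⟩, rfl⟩
  rintro _ ⟨c, rfl | rfl, rfl⟩ ⟨t, x⟩
  · simpa using (hper t).1 x
  · simpa using (hper t).2 x

lemma exists_eq_toField_slice {v : ℝ → V3 → V3} (hv : ContDiff ℝ (⊤ : ℕ∞) (Function.uncurry v))
    (hper : ∀ t, hperV (v t)) :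
    ∃ V : Fin 3 → SpaceTimeFunction, v = fun t => toField (slice t ∘ V) := by
  choose V hV using fun i => exists_eq_slice (f := fun t x => v t x i) (contDiff_pi.1 hv i)
    fun t => ⟨fun x => congrFun ((hper t).1 x) i, fun x => congrFun ((hper t).2 x) i⟩
  exact ⟨V, funext fun t => funext fun x => funext fun i => congrFun (congrFun (hV i) t) x⟩

namespace IsMHDSolution

variable {ν μ T : ℝ}

lemma isMHDFlow {U B : Fin 3 → SpaceTimeFunction} {P : SpaceTimeFunction}
    (h : IsMHDSolution ν μ T (fun t => toField (slice t ∘ U)) (fun t => toField (slice t ∘ B))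
      (fun t x => evalAt x (slice t P)))
    (hbc : ∀ t ∈ Set.Icc 0 T,
      SatisfiesBoundaryConditions (toField (slice t ∘ U)) (toField (slice t ∘ B))) :
    IsMHDFlow ν μ T U B fun t => slice t P - (1 / 2 : ℝ) • ∑ k, slice t (U k) ^ 2
      + (1 / 2 : ℝ) • ∑ k, slice t (B k) ^ 2 := by
  have admissible (t : ℝ) (ht : t ∈ Set.Icc 0 T) :=
    (hbc t ht).isAdmissible (h.divergence_velocity t ht) (h.divergence_magnetic t ht)
  refine ⟨admissible, fun t ht i => ext_evalAt fun x => ?_, fun t ht i => ext_evalAt fun x => ?_⟩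
  · have momentum := h.momentum t ht x i
    rw [cross_eq_neg_cross (toField _ x), Pi.neg_apply, cross_vcurl_toField,
      cross_vcurl_toField, vlap_toField] at momentum
    have time : deriv (fun s => toField (slice s ∘ U) x i) t = _ :=
      (hasDerivAt_evalAt_slice (U i) x t).deriv
    have pressure : grad (fun y => evalAt y (slice t P)) x i
      = evalAt x (slabDeriv i (slice t P)) := rfl
    rw [time, pressure] at momentum
    simp only [Function.comp_apply, map_sub, map_add, map_smul, Derivation.map_smul,
      smul_eq_mul] at momentum ⊢
    linear_combination momentum
  · have induction := h.induction t ht x i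
    rw [vcurl_cross_toField _ _ _ (admissible t ht).divergence_velocity
      (admissible t ht).divergence_magnetic, vlap_toField] at induction
    have time : deriv (fun s => toField (slice s ∘ B) x i) t = _ :=
      (hasDerivAt_evalAt_slice (B i) x t).deriv
    rw [time] at induction
    simp only [Function.comp_apply, map_sub, map_add, map_smul, smul_eq_mul] at induction ⊢
    linear_combination induction

end IsMHDSolution

lemma toField_slice_sub (V W : Fin 3 → SpaceTimeFunction) (t : ℝ) :
    toField (slice t ∘ (V - W)) = fun x => toField (slice t ∘ V) x - toField (slice t ∘ W) x := by
  rw [slice_comp_sub]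
  exact funext fun x => funext fun i => map_sub (evalAt x) _ _

lemma integral_eq_energy (U B : Fin 3 → SpaceTimeFunction) (t : ℝ) :
    (∫ x in Q3,
      (dot (toField (slice t ∘ U) x) (toField (slice t ∘ U) x)
        + dot (vlap (toField (slice t ∘ U)) x) (vlap (toField (slice t ∘ U)) x)
        + dot (toField (slice t ∘ B) x) (toField (slice t ∘ B) x)
        + dot (vlap (toField (slice t ∘ B)) x) (vlap (toField (slice t ∘ B)) x)))
      = energy U B t := by
  refine integral_congr_ae (.of_forall fun x => ?_)
  simp only [dot, vlap_toField, energyDensity, pairing, map_add, map_mul, Fin.sum_univ_three,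
    toField, Function.comp_apply]
  ring

end Solutions

end Slab

theorem stmt_18_general {ν μ T M : ℝ} {u B u₀ B₀ : ℝ → V3 → V3} {P P₀ : ℝ → V3 → ℝ}
    (h : IsMHDSolution ν μ T u B P) (h₀ : IsMHDSolution 0 0 T u₀ B₀ P₀)
    (hbc : ∀ t ∈ Set.Icc 0 T, SatisfiesBoundaryConditions (u t) (B t))
    (hbc₀ : ∀ t ∈ Set.Icc 0 T, SatisfiesBoundaryConditions (u₀ t) (B₀ t))
    (hinit : ∀ x ∈ Q3, u 0 x = u₀ 0 x ∧ B 0 x = B₀ 0 x)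
    (hbound : ∀ t ∈ Set.Icc 0 T, HasDerivsBoundedBy M 4 (u t) ∧ HasDerivsBoundedBy M 4 (B t))
    (hbound₀ : ∀ t ∈ Set.Icc 0 T, HasDerivsBoundedBy M 3 (u₀ t) ∧ HasDerivsBoundedBy M 3 (B₀ t))
    {t : ℝ} (ht : t ∈ Set.Icc 0 T) :
    (∫ x in Q3,
      (dot (u t x - u₀ t x) (u t x - u₀ t x)
        + dot (vlap (fun y => u t y - u₀ t y) x) (vlap (fun y => u t y - u₀ t y) x)
        + dot (B t x - B₀ t x) (B t x - B₀ t x)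
        + dot (vlap (fun y => B t y - B₀ t y) x) (vlap (fun y => B t y - B₀ t y) x)))
      ≤ Real.exp (10 ^ 4 * M * t) * (ν ^ 2 + μ ^ 2) := by
  obtain ⟨U, rfl⟩ := exists_eq_toField_slice h.contDiff_velocity h.periodic_velocity
  obtain ⟨B, rfl⟩ := exists_eq_toField_slice h.contDiff_magnetic h.periodic_magnetic
  obtain ⟨P, rfl⟩ := exists_eq_slice h.contDiff_pressure h.periodic_pressure
  obtain ⟨U₀, rfl⟩ := exists_eq_toField_slice h₀.contDiff_velocity h₀.periodic_velocity
  obtain ⟨B₀, rfl⟩ := exists_eq_toField_slice h₀.contDiff_magnetic h₀.periodic_magnetic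
  obtain ⟨P₀, rfl⟩ := exists_eq_slice h₀.contDiff_pressure h₀.periodic_pressure
  have energy_eq := integral_eq_energy (U - U₀) (B - B₀) t
  rw [toField_slice_sub, toField_slice_sub] at energy_eq
  exact energy_eq.trans_le <| (h.isMHDFlow hbc).energy_sub_le (h₀.isMHDFlow hbc₀)
    (fun s hs x hx i => .of_pdList fun l hl => (hbound s hs).1 x hx l hl i)
    (fun s hs x hx i => .of_pdList fun l hl => (hbound s hs).2 x hx l hl i)
    (fun s hs x hx i => .of_pdList fun l hl => (hbound₀ s hs).1 x hx l hl i)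
    (fun s hs x hx i => .of_pdList fun l hl => (hbound₀ s hs).2 x hx l hl i)
    (fun x hx i => congrFun (hinit x hx).1 i) (fun x hx i => congrFun (hinit x hx).2 i) ht

/-- Convergence rate: for the viscous MHD solution `(u,B,P)` (with the extra boundary
conditions) and the ideal MHD solution `(u⁰,B⁰,P⁰)` with the same initial data on the slab,
whose spatial derivatives up to order 4 are bounded by `M`, there is `C = C(T,M)`,
independent of `ν, μ ∈ (0,1]`, with
`∫_Q (|u−u⁰|² + |Δ(u−u⁰)|² + |B−B⁰|² + |Δ(B−B⁰)|²) dx ≤ C(ν+μ)` on `[0,T]`. -/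
theorem stmt_18 (T M : ℝ) (hT : 0 < T) (hM : 0 < M) :
    ∃ C : ℝ, ∀ nu mu : ℝ, nu ∈ Set.Ioc (0:ℝ) 1 → mu ∈ Set.Ioc (0:ℝ) 1 →
    ∀ (u B u0 B0 : ℝ → V3 → V3) (P P0 : ℝ → V3 → ℝ),
    ContDiff ℝ (⊤ : ℕ∞) (Function.uncurry u) → ContDiff ℝ (⊤ : ℕ∞) (Function.uncurry B) →
    ContDiff ℝ (⊤ : ℕ∞) (Function.uncurry P) → ContDiff ℝ (⊤ : ℕ∞) (Function.uncurry u0) →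
    ContDiff ℝ (⊤ : ℕ∞) (Function.uncurry B0) → ContDiff ℝ (⊤ : ℕ∞) (Function.uncurry P0) →
    (∀ t, hperV (u t)) → (∀ t, hperV (B t)) → (∀ t, hperS (P t)) →
    (∀ t, hperV (u0 t)) → (∀ t, hperV (B0 t)) → (∀ t, hperS (P0 t)) →
    -- the viscous MHD system on [0,T]
    (∀ t ∈ Set.Icc (0:ℝ) T, ∀ x, ∀ i : Fin 3,
      deriv (fun s => u s x i) t - nu * vlap (u t) x i
        + cross (vcurl (u t) x) (u t x) i + cross (B t x) (vcurl (B t) x) i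
        + grad (P t) x i = 0) →
    (∀ t ∈ Set.Icc (0:ℝ) T, ∀ x, vdiv (u t) x = 0) →
    (∀ t ∈ Set.Icc (0:ℝ) T, ∀ x, ∀ i : Fin 3,
      deriv (fun s => B s x i) t - mu * vlap (B t) x i
        = vcurl (fun y => cross (u t y) (B t y)) x i) →
    (∀ t ∈ Set.Icc (0:ℝ) T, ∀ x, vdiv (B t) x = 0) →
    -- boundary conditions for the viscous solution
    (∀ t ∈ Set.Icc (0:ℝ) T, ∀ x, onBdry x →
      u t x 2 = 0 ∧ pd 2 (fun y => u t y 0) x = 0 ∧ pd 2 (fun y => u t y 1) x = 0) →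
    (∀ t ∈ Set.Icc (0:ℝ) T, ∀ x, onBdry x → B t x 0 = 0 ∧ B t x 1 = 0) →
    (∀ t ∈ Set.Icc (0:ℝ) T, ∀ x, onBdry x → vlap (B t) x 0 = 0 ∧ vlap (B t) x 1 = 0) →
    (∀ t ∈ Set.Icc (0:ℝ) T, ∀ x, onBdry x →
      vcurl (vlap (u t)) x 0 = 0 ∧ vcurl (vlap (u t)) x 1 = 0) →
    -- the ideal MHD system on [0,T]
    (∀ t ∈ Set.Icc (0:ℝ) T, ∀ x, ∀ i : Fin 3,
      deriv (fun s => u0 s x i) t + cross (vcurl (u0 t) x) (u0 t x) i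
        + cross (B0 t x) (vcurl (B0 t) x) i + grad (P0 t) x i = 0) →
    (∀ t ∈ Set.Icc (0:ℝ) T, ∀ x, vdiv (u0 t) x = 0) →
    (∀ t ∈ Set.Icc (0:ℝ) T, ∀ x, ∀ i : Fin 3,
      deriv (fun s => B0 s x i) t = vcurl (fun y => cross (u0 t y) (B0 t y)) x i) →
    (∀ t ∈ Set.Icc (0:ℝ) T, ∀ x, vdiv (B0 t) x = 0) →
    -- boundary conditions for the ideal solution
    (∀ t ∈ Set.Icc (0:ℝ) T, ∀ x, onBdry x →
      u0 t x 2 = 0 ∧ vcurl (u0 t) x 0 = 0 ∧ vcurl (u0 t) x 1 = 0) →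
    (∀ t ∈ Set.Icc (0:ℝ) T, ∀ x, onBdry x → B0 t x 0 = 0 ∧ B0 t x 1 = 0) →
    (∀ t ∈ Set.Icc (0:ℝ) T, ∀ x, onBdry x →
      vlap (B0 t) x 0 = 0 ∧ vlap (B0 t) x 1 = 0) →
    -- same initial data on the slab
    (∀ x : V3, 0 ≤ x 2 → x 2 ≤ 1 → u 0 x = u0 0 x ∧ B 0 x = B0 0 x) →
    -- all spatial partial derivatives up to order 4 bounded by M on the slab
    (∀ t ∈ Set.Icc (0:ℝ) T, ∀ x : V3, 0 ≤ x 2 → x 2 ≤ 1 →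
      ∀ l : List (Fin 3), l.length ≤ 4 → ∀ i : Fin 3,
        |pdList l (fun y => u t y i) x| ≤ M ∧ |pdList l (fun y => B t y i) x| ≤ M ∧
        |pdList l (fun y => u0 t y i) x| ≤ M ∧ |pdList l (fun y => B0 t y i) x| ≤ M) →
    ∀ t ∈ Set.Icc (0:ℝ) T,
      (∫ x in Q3,
        (dot (u t x - u0 t x) (u t x - u0 t x)
          + dot (vlap (fun y => u t y - u0 t y) x) (vlap (fun y => u t y - u0 t y) x)
          + dot (B t x - B0 t x) (B t x - B0 t x)
          + dot (vlap (fun y => B t y - B0 t y) x) (vlap (fun y => B t y - B0 t y) x)))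
        ≤ C * (nu + mu) := by
  refine ⟨Real.exp (10 ^ 4 * M * T), ?_⟩
  intro nu mu hnu hmu u B u0 B0 P P0 su sB sP su0 sB0 sP0 pu pB pP pu0 pB0 pP0 eu du eB dB
    bu bB bB' _ eu0 du0 eB0 dB0 bu0 bB0 bB0' same0 bd t ht
  have squares_le : nu ^ 2 + mu ^ 2 ≤ nu + mu :=
    add_le_add (pow_le_of_le_one hnu.1.le hnu.2 two_ne_zero)
      (pow_le_of_le_one hmu.1.le hmu.2 two_ne_zero)
  have rate := stmt_18_general (M := M) ⟨su, sB, sP, pu, pB, pP, eu, du, eB, dB⟩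
    ⟨su0, sB0, sP0, pu0, pB0, pP0, by simpa only [zero_mul, sub_zero] using eu0, du0,
      by simpa only [zero_mul, sub_zero] using eB0, dB0⟩
    (fun s hs => ⟨bu s hs, bB s hs, bB' s hs⟩)
    (fun s hs => .of_vcurl ((su0.comp (contDiff_prodMk_right s)).differentiable (by simp))
      (bu0 s hs) (bB0 s hs) (bB0' s hs))
    (fun x hx => same0 x (hx.1 2) (hx.2 2))
    (fun s hs => ⟨fun x hx l hl i => (bd s hs x (hx.1 2) (hx.2 2) l hl i).1,
      fun x hx l hl i => (bd s hs x (hx.1 2) (hx.2 2) l hl i).2.1⟩)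
    (fun s hs => ⟨fun x hx l hl i => (bd s hs x (hx.1 2) (hx.2 2) l (by omega) i).2.2.1,
      fun x hx l hl i => (bd s hs x (hx.1 2) (hx.2 2) l (by omega) i).2.2.2⟩) ht
  refine rate.trans (mul_le_mul ?_ squares_le (by positivity) (by positivity))
  exact Real.exp_le_exp.2 (mul_le_mul_of_nonneg_left ht.2 (by positivity))
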